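/- The node formulae of Conditional XPath (CXPath) have precisely the expressive power of unary FO queries over ordered unranked Σ-trees: a unary query is definable by a CXPath node formula if and only if it is definable by an FO formula in one free variable. -/

import Mathlib

/-!
**From first-order logic to Conditional XPath.** The truth of a first-order formula of quantifier
rank `k` at a node depends only on the class of the pointed tree under the `k`-round
Ehrenfeucht–Fraïssé game (`Region.BackForth.sat_iff`), and there are finitely many classes, so it
suffices to define the class of a node by a node formula.

Types compose: when a structure is glued from pieces in such a way that the relations between
different pieces depend only on marked points, its type is determined by the types of the pieces
(`MarkedStructure.IsSum.backForth`). Hence the `k`-types form finite monoids under gluing, and these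
are aperiodic (`MarkedStructure.KType.exists_pow_succ_eq_pow`), because `k` rounds cannot tell apart
two large numbers of copies.

The monoids meet path formulas in a version of Kamp's theorem (`IsDeterministicStep.pathProduct`).
Let the nodes be labelled definably by elements of a finite aperiodic monoid. Then, along a
deterministic step (parent, next or previous sibling), the relation saying that the path from `x` to
`y` has product `m` is given by a path formula. The proof is by induction with local divisors: a
path is cut at the occurrences of a letter `c ≠ 1`, the segments in between use fewer letters, and
the word of segments is evaluated in the local divisor at `c`, which is a smaller aperiodic monoid.

The definability of the type of the forest below a node now follows by induction on `k`. If the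
`k`-types of such forests are definable, then Kamp's theorem along siblings defines the types of the
forests to the left and right of a node, hence of its context, and Kamp's theorem along the parent
step defines the relation `HasShape σ s x`: the regions of the forest below `s` situated above, to
the left of, to the right of and below the node `x`, and the label of `x`, are as prescribed by `σ`.
By the composition lemma these data determine the `k`-type of the forest with `x` as a named point.
The `(k + 1)`-type of the forest is therefore determined by the `k`-type and the set of those `σ`
that occur. Applying `HasShape` with the root as `s` gives the type of a node in the whole tree.

**From Conditional XPath to first-order logic.** Each step or its converse is deterministic, so the
nodes visited by `(step/?α)⁺` are exactly those between the end points
(`transGen_and_iff_of_leftUnique`), and the operator is expressed by the descendant and sibling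
orders.
-/

namespace UnrankedTrees

/-! ### Unranked trees: tree domains and ordered unranked Σ-trees.
Nodes are finite strings over ℕ; a tree domain is a finite prefix-closed set
of nodes such that `s ++ [i] ∈ D` implies `s ++ [j] ∈ D` for all `j < i`. -/

abbrev Node : Type := List ℕ

/-- An ordered unranked tree over alphabet `A`: a tree domain with a labeling. -/
structure UTree (A : Type) where
  dom : Finset Node
  nil_mem : ([] : Node) ∈ dom
  prefix_closed : ∀ ⦃s t : Node⦄, s ∈ dom → t <+: s → t ∈ dom
  sib_closed : ∀ ⦃s : Node⦄ ⦃i j : ℕ⦄, s ++ [i] ∈ dom → j < i → s ++ [j] ∈ dom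
  label : Node → A

namespace UTree

variable {A : Type}

/-- The child relation `≺_ch`. -/
def childR (T : UTree A) (s t : Node) : Prop :=
  s ∈ T.dom ∧ t ∈ T.dom ∧ ∃ i : ℕ, t = s ++ [i]

/-- The descendant-or-self relation `≺*_ch` (the prefix relation). -/
def descR (T : UTree A) (s t : Node) : Prop :=
  s ∈ T.dom ∧ t ∈ T.dom ∧ s <+: t

/-- The next-sibling relation `≺_ns`. -/
def nsR (T : UTree A) (s t : Node) : Prop :=
  s ∈ T.dom ∧ t ∈ T.dom ∧ ∃ (u : Node) (i : ℕ), s = u ++ [i] ∧ t = u ++ [i + 1]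

/-- The sibling ordering `≺*_ns` (reflexive-transitive closure of next-sibling). -/
def sibR (T : UTree A) (s t : Node) : Prop :=
  s ∈ T.dom ∧ t ∈ T.dom ∧ ∃ (u : Node) (i j : ℕ), s = u ++ [i] ∧ t = u ++ [j] ∧ i ≤ j

/-- The first-child relation `≺_fc`. -/
def firstChildR (T : UTree A) (s t : Node) : Prop :=
  s ∈ T.dom ∧ t ∈ T.dom ∧ t = s ++ [0]

/-- The number of children of a node. -/
noncomputable def childCount (T : UTree A) (s : Node) : ℕ :=
  Set.ncard {i : ℕ | s ++ [i] ∈ T.dom}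

/-- The list of children of a node `s`, in sibling order: `s·0, …, s·(n-1)`. -/
noncomputable def childrenList (T : UTree A) (s : Node) : List Node :=
  (List.range (T.childCount s)).map fun i => s ++ [i]

/-- `s` is a leaf of `T`. -/
def isLeaf (T : UTree A) (s : Node) : Prop :=
  s ∈ T.dom ∧ ∀ i : ℕ, s ++ [i] ∉ T.dom

/-- `s` has no next sibling in `T` (the root also counts as "last"). -/
def isLast (T : UTree A) (s : Node) : Prop :=
  s = [] ∨ ∃ (u : Node) (i : ℕ), s = u ++ [i] ∧ u ++ [i + 1] ∉ T.dom

end UTree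

/-! ### First-order logic over ordered unranked trees. -/

inductive FO (A : Type) : Type where
  | eq : ℕ → ℕ → FO A
  | desc : ℕ → ℕ → FO A                -- x ≺*_ch y
  | sib : ℕ → ℕ → FO A                 -- x ≺*_ns y
  | lab : A → ℕ → FO A                 -- P_a(x)
  | not : FO A → FO A
  | and : FO A → FO A → FO A
  | ex : ℕ → FO A → FO A

namespace FO

variable {A : Type}

def Sat (T : UTree A) (v : ℕ → Node) : FO A → Prop
  | .eq x y => v x = v y
  | .desc x y => T.descR (v x) (v y)
  | .sib x y => T.sibR (v x) (v y)
  | .lab a x => v x ∈ T.dom ∧ T.label (v x) = a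
  | .not φ => ¬ Sat T v φ
  | .and φ ψ => Sat T v φ ∧ Sat T v ψ
  | .ex n φ => ∃ s ∈ T.dom, Sat T (Function.update v n s) φ

/-- `φ`, as a sentence, defines the Boolean query `L`. -/
def DefinesB (φ : FO A) (L : Set (UTree A)) : Prop :=
  ∀ (T : UTree A) (v : ℕ → Node), T ∈ L ↔ Sat T v φ

/-- `φ`, with the single free variable `0`, defines the unary query `Q`. -/
def DefinesU (φ : FO A) (Q : UTree A → Set Node) : Prop :=
  ∀ (T : UTree A) (v : ℕ → Node) (s : Node), s ∈ T.dom →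
    (s ∈ Q T ↔ Sat T (Function.update v 0 s) φ)

end FO

/-! ### XPath steps. -/

inductive XStep : Type where
  | ch : XStep        -- ≺_ch
  | chI : XStep       -- ≺_ch⁻
  | ns : XStep        -- ≺_ns
  | nsI : XStep       -- ≺_ns⁻

def XStep.rel {A : Type} (T : UTree A) : XStep → Node → Node → Prop
  | .ch => T.childR
  | .chI => fun s t => T.childR t s
  | .ns => T.nsR
  | .nsI => fun s t => T.nsR t s

/-! ### Conditional XPath: node formulas and path formulas. -/

mutual
  inductive CXNode (A : Type) : Type where
    | lab : A → CXNode A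
    | not : CXNode A → CXNode A
    | or : CXNode A → CXNode A → CXNode A
    | E : CXPath A → CXNode A
  inductive CXPath (A : Type) : Type where
    | test : CXNode A → CXPath A                 -- ?α
    | step : XStep → CXPath A
    | until : XStep → CXNode A → CXPath A        -- (step/?α)⁺
    | comp : CXPath A → CXPath A → CXPath A
    | or : CXPath A → CXPath A → CXPath A
end

mutual
  def CXNode.Sat {A : Type} (T : UTree A) : Node → CXNode A → Prop
    | s, .lab a => s ∈ T.dom ∧ T.label s = a
    | s, .not α => ¬ CXNode.Sat T s α
    | s, .or α β => CXNode.Sat T s α ∨ CXNode.Sat T s β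
    | s, .E β => ∃ t : Node, CXPath.Sat T s t β
  def CXPath.Sat {A : Type} (T : UTree A) : Node → Node → CXPath A → Prop
    | s, t, .test α => s = t ∧ CXNode.Sat T s α
    | s, t, .step st => st.rel T s t
    | s, t, .until st α => ∃ p : List Node, p ≠ [] ∧
        List.Chain' (st.rel T) (s :: p) ∧
        (s :: p).getLast (List.cons_ne_nil _ _) = t ∧
        ∀ u ∈ p, CXNode.Sat T u α
    | s, t, .comp β γ => ∃ u : Node, CXPath.Sat T s u β ∧ CXPath.Sat T u t γ
    | s, t, .or β γ => CXPath.Sat T s t β ∨ CXPath.Sat T s t γ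
end

open Relation

/-! ### Back-and-forth equivalence -/

/-- A relational structure with binary relations named by `ρ` and labels in `A`. When structures are
glued together, the relations between points of different pieces depend only on whether the points
are marked. -/
structure MarkedStructure (ρ A : Type*) where
  carrier : Type
  rel : ρ → carrier → carrier → Prop
  label : carrier → A
  marked : carrier → Prop

namespace MarkedStructure

variable {ρ A : Type*}

instance : CoeSort (MarkedStructure ρ A) Type := ⟨carrier⟩

/-- The pairs in `p` form a partial isomorphism between `M` and `N`. -/
structure IsPartialIso (M N : MarkedStructure ρ A) (p : SetRel M N) : Prop where
  label_eq : ∀ ⦃a b⦄, (a, b) ∈ p → M.label a = N.label b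
  marked_iff : ∀ ⦃a b⦄, (a, b) ∈ p → (M.marked a ↔ N.marked b)
  eq_iff : ∀ ⦃a b a' b'⦄, (a, b) ∈ p → (a', b') ∈ p → (a = a' ↔ b = b')
  rel_iff : ∀ ⦃a b a' b'⦄, (a, b) ∈ p → (a', b') ∈ p → ∀ r, M.rel r a a' ↔ N.rel r b b'

/-- Duplicator wins the `k`-round Ehrenfeucht–Fraïssé game between `M` and `N` from `p`. -/
def BackForth (M N : MarkedStructure ρ A) : ℕ → SetRel M N → Prop
  | 0, p => IsPartialIso M N p
  | k + 1, p => BackForth M N k p ∧ (∀ a, ∃ b, BackForth M N k (insert (a, b) p)) ∧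
      ∀ b, ∃ a, BackForth M N k (insert (a, b) p)

variable {M N K : MarkedStructure ρ A}

theorem BackForth.isPartialIso {k : ℕ} {p : SetRel M N} (h : BackForth M N k p) :
    IsPartialIso M N p := by
  induction k with
  | zero => exact h
  | succ k ih => exact ih h.1

theorem BackForth.mono {k : ℕ} {p q : SetRel M N} (h : BackForth M N k p) (hqp : q ⊆ p) :
    BackForth M N k q := by
  induction k generalizing p q with
  | zero =>
    exact ⟨fun _ _ ha => h.label_eq (hqp ha), fun _ _ ha => h.marked_iff (hqp ha),
      fun _ _ _ _ ha hb => h.eq_iff (hqp ha) (hqp hb),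
      fun _ _ _ _ ha hb => h.rel_iff (hqp ha) (hqp hb)⟩
  | succ k ih =>
    obtain ⟨stay, forth, back⟩ := h
    exact ⟨ih stay hqp, fun a => (forth a).imp fun b hb => ih hb (Set.insert_subset_insert hqp),
      fun b => (back b).imp fun a ha => ih ha (Set.insert_subset_insert hqp)⟩

theorem BackForth.symm {k : ℕ} {p : SetRel M N} (h : BackForth M N k p) :
    BackForth N M k p.inv := by
  induction k generalizing p with
  | zero =>
    exact ⟨fun _ _ ha => (h.label_eq ha).symm, fun _ _ ha => (h.marked_iff ha).symm,
      fun _ _ _ _ ha hb => (h.eq_iff ha hb).symm,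
      fun _ _ _ _ ha hb r => (h.rel_iff ha hb r).symm⟩
  | succ k ih =>
    obtain ⟨stay, forth, back⟩ := h
    have inv_insert (a : M) (b : N) : insert (b, a) p.inv ⊆ (insert (a, b) p : SetRel M N).inv := by
      rintro ⟨b', a'⟩ (hab | hab)
      · exact Or.inl (congrArg Prod.swap hab)
      · exact Or.inr hab
    exact ⟨ih stay, fun b => (back b).imp fun a ha => (ih ha).mono (inv_insert a b),
      fun a => (forth a).imp fun b hb => (ih hb).mono (inv_insert a b)⟩

theorem BackForth.trans {k : ℕ} {p : SetRel M N} {q : SetRel N K} (hp : BackForth M N k p)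
    (hq : BackForth N K k q) : BackForth M K k (p.comp q) := by
  induction k generalizing p q with
  | zero =>
    refine ⟨?_, ?_, ?_, ?_⟩
    · rintro a c ⟨b, hab, hbc⟩
      exact (hp.label_eq hab).trans (hq.label_eq hbc)
    · rintro a c ⟨b, hab, hbc⟩
      exact (hp.marked_iff hab).trans (hq.marked_iff hbc)
    · rintro a c a' c' ⟨b, hab, hbc⟩ ⟨b', hab', hbc'⟩
      exact (hp.eq_iff hab hab').trans (hq.eq_iff hbc hbc')
    · rintro a c a' c' ⟨b, hab, hbc⟩ ⟨b', hab', hbc'⟩ r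
      exact (hp.rel_iff hab hab' r).trans (hq.rel_iff hbc hbc' r)
  | succ k ih =>
    have insert_comp (a : M) (b : N) (c : K) :
        insert (a, c) (p.comp q) ⊆ SetRel.comp (insert (a, b) p) (insert (b, c) q) := by
      rintro x (rfl | ⟨b', hp', hq'⟩)
      · exact ⟨b, Or.inl rfl, Or.inl rfl⟩
      · exact ⟨b', Or.inr hp', Or.inr hq'⟩
    obtain ⟨stay, forth, back⟩ := hp
    obtain ⟨stay', forth', back'⟩ := hq
    refine ⟨ih stay stay', fun a => ?_, fun c => ?_⟩
    · obtain ⟨b, hb⟩ := forth a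
      obtain ⟨c, hc⟩ := forth' b
      exact ⟨c, (ih hb hc).mono (insert_comp a b c)⟩
    · obtain ⟨b, hb⟩ := back' c
      obtain ⟨a, ha⟩ := back b
      exact ⟨a, (ih ha hb).mono (insert_comp a b c)⟩

/-- The structure `M` with its marks replaced by `m`. -/
def remark (M : MarkedStructure ρ A) (m : M → Prop) : MarkedStructure ρ A := { M with marked := m }

theorem BackForth.remark {k : ℕ} {p q : SetRel M N} {m : M → Prop} {n : N → Prop}
    (h : BackForth M N k p) (hqp : q ⊆ p) (hm : ∀ a, m a ↔ a ∈ q.dom) (hn : ∀ b, n b ↔ b ∈ q.cod) :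
    BackForth (M.remark m) (N.remark n) k p := by
  induction k generalizing p with
  | zero =>
    refine ⟨h.label_eq, fun a b hab => (hm a).trans (Iff.trans ⟨?_, ?_⟩ (hn b).symm), h.eq_iff,
      h.rel_iff⟩
    · rintro ⟨c, hac⟩
      exact (h.eq_iff hab (hqp hac)).1 rfl ▸ ⟨a, hac⟩
    · rintro ⟨c, hcb⟩
      exact (h.eq_iff hab (hqp hcb)).2 rfl ▸ ⟨b, hcb⟩
  | succ k ih =>
    obtain ⟨stay, forth, back⟩ := h
    exact ⟨ih stay hqp,
      fun a => (forth a).imp fun b hb => ih hb (hqp.trans (Set.subset_insert _ _)),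
      fun b => (back b).imp fun a ha => ih ha (hqp.trans (Set.subset_insert _ _))⟩

/-- Isomorphisms of marked structures. -/
structure Iso (M N : MarkedStructure ρ A) extends M ≃ N where
  label_eq : ∀ a, N.label (toEquiv a) = M.label a
  marked_iff : ∀ a, N.marked (toEquiv a) ↔ M.marked a
  rel_iff : ∀ r a b, N.rel r (toEquiv a) (toEquiv b) ↔ M.rel r a b

/-- The identity isomorphism. -/
def Iso.refl (M : MarkedStructure ρ A) : Iso M M :=
  ⟨Equiv.refl M, fun _ => rfl, fun _ => Iff.rfl, fun _ _ _ => Iff.rfl⟩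

/-- The inverse of an isomorphism. -/
def Iso.symm (e : Iso M N) : Iso N M where
  toEquiv := e.toEquiv.symm
  label_eq b := by simp [← e.label_eq]
  marked_iff b := by simp [← e.marked_iff]
  rel_iff r a b := by simp [← e.rel_iff]

/-- The composite of two isomorphisms. -/
def Iso.trans (e : Iso M N) (e' : Iso N K) : Iso M K where
  toEquiv := e.toEquiv.trans e'.toEquiv
  label_eq a := by simp [e.label_eq, e'.label_eq]
  marked_iff a := by simp [e.marked_iff, e'.marked_iff]
  rel_iff r a b := by simp [e.rel_iff, e'.rel_iff]

theorem Iso.backForth (e : Iso M N) (k : ℕ) : BackForth M N k (Function.graph e.toEquiv) := by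
  induction k with
  | zero =>
    refine ⟨?_, ?_, ?_, ?_⟩
    · rintro a _ rfl
      exact (e.label_eq a).symm
    · rintro a _ rfl
      exact (e.marked_iff a).symm
    · rintro a _ a' _ rfl rfl
      exact e.injective.eq_iff.symm
    · rintro a _ a' _ rfl rfl r
      exact (e.rel_iff r a a').symm
  | succ k ih =>
    exact ⟨ih, fun a => ⟨e.toEquiv a, ih.mono (Set.insert_subset rfl subset_rfl)⟩,
      fun b => ⟨e.toEquiv.symm b,
        ih.mono (Set.insert_subset (e.toEquiv.apply_symm_apply b) subset_rfl)⟩⟩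

theorem BackForth.refl (M : MarkedStructure ρ A) (k : ℕ) :
    BackForth M M k (Function.graph id) :=
  (Iso.refl M).backForth k

/-! ### Sums and the composition lemma -/

/-- `M` is the disjoint union of the pieces `P i`, embedded by `e i`. The relations between
distinct pieces `i` and `j` are computed from the marks of the two points by `cross i j`. -/
structure IsSum {ι : Type*} (P : ι → MarkedStructure ρ A) (M : MarkedStructure ρ A)
    (e : ∀ i, P i → M) (cross : ι → ι → ρ → Prop → Prop → Prop) :
    Prop where
  surjective : ∀ a, ∃ i x, e i x = a
  injective : ∀ i, Function.Injective (e i)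
  disjoint : ∀ ⦃i j x y⦄, e i x = e j y → i = j
  label_eq : ∀ i x, M.label (e i x) = (P i).label x
  marked_iff : ∀ i x, M.marked (e i x) ↔ (P i).marked x
  rel_iff : ∀ i r x y, M.rel r (e i x) (e i y) ↔ (P i).rel r x y
  cross_iff : ∀ ⦃i j⦄, i ≠ j → ∀ r x y,
    M.rel r (e i x) (e j y) ↔ cross i j r ((P i).marked x) ((P j).marked y)

section Composition

variable {ι : Type*} {P P' : ι → MarkedStructure ρ A} {e : ∀ i, P i → M} {e' : ∀ i, P' i → N}
  {cross : ι → ι → ρ → Prop → Prop → Prop}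

theorem IsSum.isPartialIso (hM : IsSum P M e cross) (hN : IsSum P' N e' cross)
    {p : ∀ i, SetRel (P i) (P' i)} (hp : ∀ i, IsPartialIso (P i) (P' i) (p i)) :
    IsPartialIso M N (⋃ i, Prod.map (e i) (e' i) '' p i) := by
  have of_mem : ∀ {a b}, (a, b) ∈ ⋃ i, Prod.map (e i) (e' i) '' p i →
      ∃ i x y, (x, y) ∈ p i ∧ e i x = a ∧ e' i y = b := by
    intro a b hab
    obtain ⟨i, ⟨x, y⟩, hxy, h⟩ := Set.mem_iUnion.1 hab
    exact ⟨i, x, y, hxy, congrArg Prod.fst h, congrArg Prod.snd h⟩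
  refine ⟨fun a b hab => ?_, fun a b hab => ?_, fun a b a' b' hab hab' => ?_,
    fun a b a' b' hab hab' r => ?_⟩
  all_goals obtain ⟨i, x, y, hxy, rfl, rfl⟩ := of_mem hab
  · rw [hM.label_eq, hN.label_eq, (hp i).label_eq hxy]
  · rw [hM.marked_iff, hN.marked_iff, (hp i).marked_iff hxy]
  all_goals
    obtain ⟨j, x', y', hxy', rfl, rfl⟩ := of_mem hab'
    obtain rfl | hij := eq_or_ne i j
  · rw [(hM.injective i).eq_iff, (hN.injective i).eq_iff, (hp i).eq_iff hxy hxy']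
  · exact iff_of_false (fun h => hij (hM.disjoint h)) (fun h => hij (hN.disjoint h))
  · rw [hM.rel_iff, hN.rel_iff, (hp i).rel_iff hxy hxy']
  · rw [hM.cross_iff hij, hN.cross_iff hij, (hp i).marked_iff hxy, (hp j).marked_iff hxy']

open Classical in
/-- Duplicator answers each move inside the piece where it was made. -/
theorem IsSum.backForth (hM : IsSum P M e cross) (hN : IsSum P' N e' cross)
    {k : ℕ} {p : ∀ i, SetRel (P i) (P' i)} (hp : ∀ i, BackForth (P i) (P' i) k (p i)) :
    BackForth M N k (⋃ i, Prod.map (e i) (e' i) '' p i) := by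
  induction k generalizing p with
  | zero => exact hM.isPartialIso hN hp
  | succ k ih =>
    have extend (i : ι) (x : P i) (y : P' i) (h : BackForth (P i) (P' i) k (insert (x, y) (p i))) :
        BackForth M N k (insert (e i x, e' i y) (⋃ j, Prod.map (e j) (e' j) '' p j)) := by
      let q := Function.update p i (insert (x, y) (p i))
      have le_q (j : ι) : p j ⊆ q j := by
        obtain rfl | hj := eq_or_ne j i
        · simp [q]
        · simp [q, hj]
      have hq (j : ι) : BackForth (P j) (P' j) k (q j) := by
        obtain rfl | hj := eq_or_ne j i
        · simpa [q] using h
        · simpa [q, hj] using (hp j).1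
      refine (ih hq).mono (Set.insert_subset ?_ (Set.iUnion_mono fun j => Set.image_mono (le_q j)))
      exact Set.mem_iUnion.2 ⟨i, (x, y), by simp [q], rfl⟩
    refine ⟨ih fun i => (hp i).1, fun a => ?_, fun b => ?_⟩
    · obtain ⟨i, x, rfl⟩ := hM.surjective a
      obtain ⟨y, hy⟩ := (hp i).2.1 x
      exact ⟨_, extend i x y hy⟩
    · obtain ⟨i, y, rfl⟩ := hN.surjective b
      obtain ⟨x, hx⟩ := (hp i).2.2 y
      exact ⟨_, extend i x y hx⟩

end Composition

/-! ### Finiteness of the number of types -/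

theorem backForth_insert_of_cons {n k : ℕ} {a : Fin n → M} {b : Fin n → N} {x : M} {y : N}
    (h : BackForth M N k (Set.range fun i : Fin (n + 1) =>
      ((Fin.cons x a : Fin (n + 1) → M) i, (Fin.cons y b : Fin (n + 1) → N) i))) :
    BackForth M N k (insert (x, y) (Set.range fun i => (a i, b i))) := by
  refine h.mono (Set.insert_subset ⟨0, rfl⟩ ?_)
  rintro _ ⟨i, rfl⟩
  exact ⟨i.succ, rfl⟩

/-- The invariant for `k + 1` rounds collects the invariants for `k` rounds of all one-point
extensions. -/
theorem exists_finite_backForth_invariant.{u, v} {ρ : Type u} {A : Type v} [Finite ρ]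
    [Finite A] (k n : ℕ) :
    ∃ (I : Type (max u v)) (_ : Finite I) (τ : (M : MarkedStructure ρ A) → (Fin n → M) → I),
      ∀ M N a b, τ M a = τ N b → BackForth M N k (Set.range fun i => (a i, b i)) := by
  induction k generalizing n with
  | zero =>
    refine ⟨(Fin n → A) × (Fin n → Prop) × (Fin n → Fin n → Prop) × (Fin n → Fin n → ρ → Prop),
      inferInstance, fun M a => (fun i => M.label (a i), fun i => M.marked (a i),
        fun i j => a i = a j, fun i j r => M.rel r (a i) (a j)), fun M N a b h => ?_⟩
    simp only [Prod.mk.injEq, funext_iff, eq_iff_iff] at h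
    obtain ⟨label_eq, marked_iff, eq_iff, rel_iff⟩ := h
    refine ⟨?_, ?_, ?_, ?_⟩
    · rintro _ _ ⟨i, ⟨⟩⟩
      exact label_eq i
    · rintro _ _ ⟨i, ⟨⟩⟩
      exact marked_iff i
    · rintro _ _ _ _ ⟨i, ⟨⟩⟩ ⟨j, ⟨⟩⟩
      exact eq_iff i j
    · rintro _ _ _ _ ⟨i, ⟨⟩⟩ ⟨j, ⟨⟩⟩ r
      exact rel_iff i j r
  | succ k ih =>
    obtain ⟨I, hI, τ, hτ⟩ := ih n
    obtain ⟨J, hJ, σ, hσ⟩ := ih (n + 1)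
    refine ⟨I × Set J, inferInstance,
      fun M a => (τ M a, Set.range fun x => σ M (Fin.cons x a)), fun M N a b h => ?_⟩
    obtain ⟨hIeq, hJeq⟩ := Prod.mk.inj h
    refine ⟨hτ _ _ _ _ hIeq, fun x => ?_, fun y => ?_⟩
    · obtain ⟨y, hy⟩ := (Set.ext_iff.1 hJeq _).1 ⟨x, rfl⟩
      exact ⟨y, backForth_insert_of_cons (hσ _ _ _ _ hy.symm)⟩
    · obtain ⟨x, hx⟩ := (Set.ext_iff.1 hJeq _).2 ⟨y, rfl⟩
      exact ⟨x, backForth_insert_of_cons (hσ _ _ _ _ hx)⟩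

/-! ### Gluing and the monoid of types -/

/-- A recipe for gluing two structures: the relations from points of the first to points of the
second and back, as functions of the marks of the two points. -/
structure Gluing (ρ : Type*) where
  leftToRight : ρ → Prop → Prop → Prop
  rightToLeft : ρ → Prop → Prop → Prop

namespace Gluing

variable (χ : Gluing ρ)

/-- The disjoint union of two structures glued along `χ`; marks are inherited. -/
def sum (M N : MarkedStructure ρ A) : MarkedStructure ρ A where
  carrier := M ⊕ N
  rel r
    | .inl a, .inl b => M.rel r a b
    | .inl a, .inr b => χ.leftToRight r (M.marked a) (N.marked b)
    | .inr a, .inl b => χ.rightToLeft r (N.marked a) (M.marked b)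
    | .inr a, .inr b => N.rel r a b
  label := Sum.elim M.label N.label
  marked := Sum.elim M.marked N.marked

/-- The structure without points, neutral for every gluing. -/
def empty (ρ A : Type*) : MarkedStructure ρ A where
  carrier := Empty
  rel _ _ _ := False
  label := Empty.elim
  marked _ := False

/-- The relations between the pieces of a gluing in the form required by `IsSum`, the first piece
having index `false`. -/
def cross : Bool → Bool → ρ → Prop → Prop → Prop
  | false, _ => χ.leftToRight
  | true, _ => χ.rightToLeft

/-- The family of pieces of a gluing, indexed as in `Gluing.cross`. -/
def pair (M N : MarkedStructure ρ A) : Bool → MarkedStructure ρ A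
  | false => M
  | true => N

/-- The inclusions of the pieces into the glued structure. -/
def inclusion (M N : MarkedStructure ρ A) : ∀ b, pair M N b → χ.sum M N
  | false => Sum.inl
  | true => Sum.inr

theorem isSum (M N : MarkedStructure ρ A) :
    IsSum (pair M N) (χ.sum M N) (χ.inclusion M N) χ.cross where
  surjective := by
    rintro (a | a)
    · exact ⟨false, a, rfl⟩
    · exact ⟨true, a, rfl⟩
  injective := by
    rintro (_ | _)
    · exact Sum.inl_injective
    · exact Sum.inr_injective
  disjoint := by
    rintro (_ | _) (_ | _) a b hab
    · rfl
    · exact absurd hab Sum.inl_ne_inr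
    · exact absurd hab Sum.inr_ne_inl
    · rfl
  label_eq := by rintro (_ | _) a <;> rfl
  marked_iff := by rintro (_ | _) a <;> rfl
  rel_iff := by rintro (_ | _) r a b <;> rfl
  cross_iff := by
    rintro (_ | _) (_ | _) hij r a b
    · exact absurd rfl hij
    · rfl
    · rfl
    · exact absurd rfl hij

theorem backForth_sum {M' N' : MarkedStructure ρ A} {k : ℕ} {p : SetRel M M'} {q : SetRel N N'}
    (hp : BackForth M M' k p) (hq : BackForth N N' k q) :
    BackForth (χ.sum M N) (χ.sum M' N') k
      (Prod.map Sum.inl Sum.inl '' p ∪ Prod.map Sum.inr Sum.inr '' q) := by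
  let position : ∀ b, SetRel (pair M N b) (pair M' N' b)
    | false => p
    | true => q
  have h := (χ.isSum M N).backForth (χ.isSum M' N') (k := k) (p := position)
    (by rintro (_ | _) <;> assumption)
  exact h.mono (Set.union_subset (Set.subset_iUnion_of_subset false subset_rfl)
    (Set.subset_iUnion_of_subset true subset_rfl))

/-- Gluing is associative. -/
def sumAssoc (M N K : MarkedStructure ρ A) :
    Iso (χ.sum (χ.sum M N) K) (χ.sum M (χ.sum N K)) where
  toEquiv := Equiv.sumAssoc M N K
  label_eq := by rintro ((a | a) | a) <;> rfl
  marked_iff := by rintro ((a | a) | a) <;> rfl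
  rel_iff r := by rintro ((a | a) | a) ((b | b) | b) <;> rfl

/-- The empty structure is a left unit for gluing. -/
def emptySum (M : MarkedStructure ρ A) : Iso (χ.sum (empty ρ A) M) M where
  toEquiv := Equiv.emptySum Empty M
  label_eq := by rintro (⟨⟨⟩⟩ | a); rfl
  marked_iff := by rintro (⟨⟨⟩⟩ | a); rfl
  rel_iff r := by rintro (⟨⟨⟩⟩ | a) (⟨⟨⟩⟩ | b); rfl

/-- The empty structure is a right unit for gluing. -/
def sumEmpty (M : MarkedStructure ρ A) : Iso (χ.sum M (empty ρ A)) M where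
  toEquiv := Equiv.sumEmpty M Empty
  label_eq := by rintro (a | ⟨⟨⟩⟩); rfl
  marked_iff := by rintro (a | ⟨⟨⟩⟩); rfl
  rel_iff r := by rintro (a | ⟨⟨⟩⟩) (b | ⟨⟨⟩⟩); rfl

/-- Gluing respects isomorphisms of the second piece. -/
def sumCongrRight (M : MarkedStructure ρ A) (e : Iso N K) : Iso (χ.sum M N) (χ.sum M K) where
  toEquiv := Equiv.sumCongr (Equiv.refl M) e.toEquiv
  label_eq := by
    rintro (a | a)
    · rfl
    · exact e.label_eq a
  marked_iff := by
    rintro (a | a)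
    · rfl
    · exact e.marked_iff a
  rel_iff r := by
    rintro (a | a) (b | b)
    · rfl
    · exact iff_of_eq (congrArg (χ.leftToRight r (M.marked a)) (propext (e.marked_iff b)))
    · exact iff_of_eq (congrArg (χ.rightToLeft r · (M.marked b)) (propext (e.marked_iff a)))
    · exact e.rel_iff r a b

end Gluing

/-- Indistinguishability of structures in the `k`-round game from the empty position. -/
def backForthSetoid (ρ A : Type*) (k : ℕ) : Setoid (MarkedStructure ρ A) where
  r M N := BackForth M N k ∅
  iseqv := ⟨fun M => (BackForth.refl M k).mono (Set.empty_subset _), BackForth.symm,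
    fun h h' => (h.trans h').mono (Set.empty_subset _)⟩

/-- The `k`-types, that is, the classes of structures under `k`-round indistinguishability. The
parameter `χ` selects the gluing that is used as multiplication. -/
def KType (A : Type*) (k : ℕ) (_χ : Gluing ρ) : Type _ := Quotient (backForthSetoid ρ A k)

/-- The `k`-type of a structure. -/
def kType (k : ℕ) (χ : Gluing ρ) (M : MarkedStructure ρ A) : KType A k χ :=
  Quotient.mk (backForthSetoid ρ A k) M

variable {χ : Gluing ρ} {k : ℕ}

theorem kType_eq_iff : M.kType k χ = N.kType k χ ↔ BackForth M N k ∅ := Quotient.eq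

theorem Iso.kType_eq (e : Iso M N) : M.kType k χ = N.kType k χ :=
  kType_eq_iff.2 ((e.backForth k).mono (Set.empty_subset _))

instance [Finite ρ] [Finite A] : Finite (KType A k χ) := by
  obtain ⟨I, _, τ, hτ⟩ := exists_finite_backForth_invariant (ρ := ρ) (A := A) k 0
  refine Finite.of_injective (fun t : KType A k χ => τ (Quotient.out t) Fin.elim0) fun t t' h => ?_
  rw [← Quotient.out_eq t, ← Quotient.out_eq t']
  exact Quotient.sound ((hτ _ _ _ _ h).mono (Set.empty_subset _))

instance : Monoid (KType A k χ) where
  mul := Quotient.map₂ χ.sum fun _ _ h _ _ h' => (χ.backForth_sum h h').mono (Set.empty_subset _)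
  one := Quotient.mk _ (Gluing.empty ρ A)
  mul_assoc := by
    rintro ⟨M⟩ ⟨N⟩ ⟨K⟩
    exact (χ.sumAssoc M N K).kType_eq
  one_mul := by
    rintro ⟨M⟩
    exact (χ.emptySum M).kType_eq
  mul_one := by
    rintro ⟨M⟩
    exact (χ.sumEmpty M).kType_eq

theorem kType_sum (M N : MarkedStructure ρ A) :
    (χ.sum M N).kType k χ = M.kType k χ * N.kType k χ := rfl

theorem kType_eq_one [IsEmpty M] : M.kType k χ = 1 :=
  Iso.kType_eq (N := Gluing.empty ρ A)
    ⟨Equiv.equivOfIsEmpty M Empty, isEmptyElim, isEmptyElim, fun _ => isEmptyElim⟩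

theorem IsSum.kType_eq_mul {P : Bool → MarkedStructure ρ A} {e : ∀ b, P b → M}
    (h : IsSum P M e χ.cross) :
    M.kType k χ = (P false).kType k χ * (P true).kType k χ := by
  rw [← kType_sum, kType_eq_iff]
  refine (h.backForth (χ.isSum (P false) (P true)) (p := fun _ => ∅) ?_).mono (Set.empty_subset _)
  rintro (_ | _)
  · exact (BackForth.refl (P false) k).mono (Set.empty_subset _)
  · exact (BackForth.refl (P true) k).mono (Set.empty_subset _)

/-! ### Aperiodicity -/

namespace Gluing

variable (χ) (M)

/-- The `n`-fold gluing of a structure with itself along `χ`. -/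
def copies : ℕ → MarkedStructure ρ A
  | 0 => empty ρ A
  | n + 1 => χ.sum M (copies n)

theorem kType_copies (n : ℕ) : (χ.copies M n).kType k χ = M.kType k χ ^ n := by
  induction n with
  | zero => rfl
  | succ n ih => rw [pow_succ', ← ih, copies, kType_sum]

theorem exists_iso_copies (i j : ℕ) : Nonempty
    (Iso (χ.copies M (i + 1 + j)) (χ.sum (χ.copies M i) (χ.sum M (χ.copies M j)))) := by
  induction i with
  | zero =>
    rw [Nat.zero_add, Nat.add_comm]
    exact ⟨(χ.emptySum _).symm⟩
  | succ i ih =>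
    obtain ⟨e⟩ := ih
    rw [show i + 1 + 1 + j = (i + 1 + j) + 1 by omega]
    exact ⟨(χ.sumCongrRight M e).trans (χ.sumAssoc M _ _).symm⟩

theorem exists_iso_copies_apply_eq {n : ℕ} (x : χ.copies M n) :
    ∃ (i j : ℕ) (a : M) (e : Iso (χ.copies M n) (χ.sum (χ.copies M i) (χ.sum M (χ.copies M j)))),
      i + 1 + j = n ∧ e.toEquiv x = .inr (.inl a) := by
  induction n with
  | zero => exact Empty.elim x
  | succ n ih =>
    obtain a | x := x
    · exact ⟨0, n, a, (χ.emptySum (χ.sum M (χ.copies M n))).symm, by omega, rfl⟩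
    · obtain ⟨i, j, a, e, hij, hx⟩ := ih x
      refine ⟨i + 1, j, a, (χ.sumCongrRight M e).trans (χ.sumAssoc M _ _).symm, by omega, ?_⟩
      change (Equiv.sumAssoc _ _ _).symm (Sum.inr (e.toEquiv x)) = _
      rw [hx]
      rfl

/-- `m` and `n` are equal or both at least `2 ^ k - 1`, the number of copies from which on `k`
rounds no longer count copies. -/
def CountsAgree (k m n : ℕ) : Prop := m = n ∨ 2 ^ k ≤ m + 1 ∧ 2 ^ k ≤ n + 1

theorem CountsAgree.exists_split {i j m : ℕ} (h : CountsAgree (k + 1) (i + 1 + j) m) :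
    ∃ i' j', m = i' + 1 + j' ∧ CountsAgree k i i' ∧ CountsAgree k j j' := by
  have := Nat.two_pow_pos k
  simp only [CountsAgree, pow_succ] at h ⊢
  obtain rfl | ⟨hn, hm⟩ := h
  · exact ⟨i, j, rfl, Or.inl rfl, Or.inl rfl⟩
  · obtain hi | hi := lt_or_ge (i + 1) (2 ^ k)
    · exact ⟨i, m - 1 - i, by omega, Or.inl rfl, by omega⟩
    · obtain hj | hj := lt_or_ge (j + 1) (2 ^ k)
      · exact ⟨m - 1 - j, j, by omega, by omega, Or.inl rfl⟩
      · exact ⟨2 ^ k - 1, m - 2 ^ k, by omega, by omega, by omega⟩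

theorem backForth_copies {n m : ℕ} (h : CountsAgree k n m) :
    BackForth (χ.copies M n) (χ.copies M m) k ∅ := by
  induction k generalizing n m with
  | zero =>
    exact ⟨fun _ _ h => h.elim, fun _ _ h => h.elim, fun _ _ _ _ h => h.elim,
      fun _ _ _ _ h => h.elim⟩
  | succ k ih =>
    have forth {n m : ℕ} (h : CountsAgree (k + 1) n m) (x : χ.copies M n) :
        ∃ y, BackForth (χ.copies M n) (χ.copies M m) k {(x, y)} := by
      obtain ⟨i, j, a, e, rfl, hx⟩ := χ.exists_iso_copies_apply_eq M x
      obtain ⟨i', j', rfl, hi, hj⟩ := h.exists_split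
      obtain ⟨e'⟩ := χ.exists_iso_copies M i' j'
      have middle := χ.backForth_sum (ih hi) (χ.backForth_sum (BackForth.refl M k) (ih hj))
      refine ⟨e'.toEquiv.symm (.inr (.inl a)), ((e.backForth k).trans
        (middle.trans (e'.symm.backForth k))).mono (Set.singleton_subset_iff.2 ?_)⟩
      exact ⟨_, hx, _, Or.inr ⟨(.inl a, .inl a), Or.inl ⟨(a, a), rfl, rfl⟩, rfl⟩, rfl⟩
    have two_pow_le : 2 ^ k ≤ 2 ^ (k + 1) := Nat.pow_le_pow_right two_pos k.le_succ
    refine ⟨ih (h.imp_right fun h => ⟨two_pow_le.trans h.1, two_pow_le.trans h.2⟩),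
      fun x => ?_, fun y => ?_⟩
    · obtain ⟨y, hy⟩ := forth h x
      exact ⟨y, by simpa using hy⟩
    · obtain ⟨x, hx⟩ := forth (h.imp Eq.symm And.symm) y
      exact ⟨x, hx.symm.mono (Set.insert_subset rfl (Set.empty_subset _))⟩

end Gluing

theorem KType.exists_pow_succ_eq_pow (A : Type*) (k : ℕ) (χ : Gluing ρ) :
    ∃ n, ∀ t : KType A k χ, t ^ (n + 1) = t ^ n := by
  refine ⟨2 ^ k, ?_⟩
  rintro ⟨M⟩
  have h := χ.backForth_copies M (k := k) (n := 2 ^ k + 1) (m := 2 ^ k) (by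
    unfold Gluing.CountsAgree
    omega)
  rwa [← kType_eq_iff (χ := χ), χ.kType_copies, χ.kType_copies] at h

end MarkedStructure

/-! ### Local divisors -/

/-- The local divisor of `M` at `c`: the set `Mc ∩ cM`, with product `(u c) ∘ (c v) = u c v` and
unit `c`. -/
def LocalDivisor {M : Type*} [Monoid M] (c : M) : Type _ :=
  {x : M // (∃ u, x = u * c) ∧ ∃ v, x = c * v}

namespace LocalDivisor

variable {M : Type*} [Monoid M] {c : M}

-- The choice of `u` with `x = u c` does not matter, since `y` is a right multiple of `c`.
theorem choose_mul (x y : LocalDivisor c) {u : M} (hu : x.1 = u * c) :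
    x.2.1.choose * y.1 = u * y.1 := by
  obtain ⟨v, hv⟩ := y.2.2
  rw [hv, ← mul_assoc, ← mul_assoc, ← hu, ← x.2.1.choose_spec]

noncomputable instance : Monoid (LocalDivisor c) where
  mul x y := ⟨x.2.1.choose * y.1, by
    obtain ⟨u, hu⟩ := y.2.1
    obtain ⟨v, hv⟩ := y.2.2
    obtain ⟨w, hw⟩ := x.2.2
    exact ⟨⟨x.2.1.choose * u, by rw [hu, mul_assoc]⟩,
      w * v, by rw [hv, ← mul_assoc, ← mul_assoc, ← x.2.1.choose_spec, hw]⟩⟩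
  one := ⟨c, ⟨1, (one_mul c).symm⟩, ⟨1, (mul_one c).symm⟩⟩
  mul_assoc x y z := Subtype.ext <|
    (choose_mul _ z (u := x.2.1.choose * y.2.1.choose) (by
      rw [mul_assoc, ← y.2.1.choose_spec]; rfl)).trans (mul_assoc _ _ _)
  one_mul x := Subtype.ext ((choose_mul _ x (one_mul c).symm).trans (one_mul _))
  mul_one x := Subtype.ext x.2.1.choose_spec.symm

theorem coe_one : (1 : LocalDivisor c).1 = c := rfl

theorem coe_mul (x y : LocalDivisor c) {u : M} (hu : x.1 = u * c) : (x * y).1 = u * y.1 :=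
  choose_mul x y hu

theorem coe_pow (x : LocalDivisor c) {u : M} (hu : x.1 = u * c) (n : ℕ) :
    (x ^ n).1 = u ^ n * c := by
  induction n with
  | zero => rw [pow_zero, pow_zero, coe_one, one_mul]
  | succ n ih => rw [pow_succ', coe_mul x _ hu, ih, pow_succ', mul_assoc]

theorem pow_succ_eq_pow {n : ℕ} (h : ∀ x : M, x ^ (n + 1) = x ^ n) (x : LocalDivisor c) :
    x ^ (n + 1) = x ^ n := by
  obtain ⟨u, hu⟩ := x.2.1
  exact Subtype.ext (by rw [coe_pow x hu, coe_pow x hu, h])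

instance [Finite M] : Finite (LocalDivisor c) := Subtype.finite

end LocalDivisor

theorem eq_one_of_mul_eq_one_of_pow_succ_eq_pow {M : Type*} [Monoid M] {c u : M} {n : ℕ}
    (hc : c ^ (n + 1) = c ^ n) (hcu : c * u = 1) : c = 1 := by
  calc c = c ^ (n + 1) * u ^ n := by rw [pow_succ', mul_assoc, pow_mul_pow_eq_one n hcu, mul_one]
    _ = 1 := by rw [hc, pow_mul_pow_eq_one n hcu]

theorem LocalDivisor.card_lt {M : Type*} [Monoid M] [Finite M] {c : M} {n : ℕ}
    (h : c ^ (n + 1) = c ^ n) (hc : c ≠ 1) : Nat.card (LocalDivisor c) < Nat.card M :=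
  Finite.card_subtype_lt (x := 1) fun ⟨_, _, hv⟩ =>
    hc (eq_one_of_mul_eq_one_of_pow_succ_eq_pow h hv.symm)

variable {A : Type}

/-! ### Definability in Conditional XPath -/

theorem transGen_guard_left_iff {α : Type*} {R : α → α → Prop} {P : α → Prop} {x z : α} :
    TransGen (fun a b => P a ∧ R a b) x z ↔
      P x ∧ ∃ y, ReflTransGen (fun a b => R a b ∧ P b) x y ∧ R y z := by
  constructor
  · intro h
    induction h using TransGen.head_induction_on with
    | single h => exact ⟨h.1, _, .refl, h.2⟩
    | head h _ ih => exact ⟨h.1, ih.2.imp fun _ hy => ⟨.head ⟨h.2, ih.1⟩ hy.1, hy.2⟩⟩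
  · rintro ⟨hx, y, hxy, hyz⟩
    induction hxy using ReflTransGen.head_induction_on with
    | refl => exact .single ⟨hx, hyz⟩
    | head h _ ih => exact .head ⟨hx, h.1⟩ (ih h.2)

theorem exists_isChain_iff_transGen {α : Type*} {r : α → α → Prop} {P : α → Prop} {s t : α} :
    (∃ p : List α, p ≠ [] ∧ List.IsChain r (s :: p) ∧
      (s :: p).getLast (List.cons_ne_nil _ _) = t ∧ ∀ u ∈ p, P u) ↔
    TransGen (fun a b => r a b ∧ P b) s t := by
  constructor
  · rintro ⟨p, hne, hchain, hlast, hP⟩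
    induction p generalizing s with
    | nil => exact absurd rfl hne
    | cons u p ih =>
      have hsu : r s u ∧ P u := ⟨hchain.rel, hP u List.mem_cons_self⟩
      cases p with
      | nil => exact hlast ▸ .single hsu
      | cons w p =>
        exact .head hsu (ih (List.cons_ne_nil _ _) hchain.tail hlast
          fun u hu => hP u (List.mem_cons_of_mem _ hu))
  · intro h
    induction h using TransGen.head_induction_on with
    | single h => exact ⟨[t], by simp, by simpa using h.1, rfl, by simpa using h.2⟩
    | @head a b h _ ih =>
      obtain ⟨p, -, hchain, hlast, hP⟩ := ih
      exact ⟨b :: p, List.cons_ne_nil _ _, .cons_cons h.1 hchain, hlast,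
        List.forall_mem_cons.2 ⟨h.2, hP⟩⟩

theorem CXPath.sat_test {T : UTree A} {α : CXNode A} {s t : Node} :
    (CXPath.test α).Sat T s t ↔ s = t ∧ CXNode.Sat T s α := by
  rw [CXPath.Sat]

theorem CXPath.sat_step {T : UTree A} {st : XStep} {s t : Node} :
    (CXPath.step st).Sat T s t ↔ st.rel T s t := by
  rw [CXPath.Sat]

theorem CXPath.sat_or {T : UTree A} {β γ : CXPath A} {s t : Node} :
    (CXPath.or β γ).Sat T s t ↔ β.Sat T s t ∨ γ.Sat T s t := by
  rw [CXPath.Sat]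

theorem CXPath.sat_comp {T : UTree A} {β γ : CXPath A} {s t : Node} :
    (CXPath.comp β γ).Sat T s t ↔ ∃ u, β.Sat T s u ∧ γ.Sat T u t := by
  rw [CXPath.Sat]

theorem CXPath.sat_until {T : UTree A} {st : XStep} {α : CXNode A} {s t : Node} :
    (CXPath.until st α).Sat T s t ↔
      TransGen (fun a b => st.rel T a b ∧ CXNode.Sat T b α) s t := by
  rw [CXPath.Sat]
  exact exists_isChain_iff_transGen

theorem XStep.mem_of_rel {T : UTree A} {st : XStep} {s t : Node} (h : st.rel T s t) :
    t ∈ T.dom := by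
  cases st
  exacts [h.2.1, h.1, h.2.1, h.1]

theorem CXPath.mem_of_sat {T : UTree A} : ∀ (β : CXPath A) {s t : Node}, s ∈ T.dom →
    β.Sat T s t → t ∈ T.dom
  | .test _, _, _, hs, h => (CXPath.sat_test.1 h).1 ▸ hs
  | .step _, _, _, _, h => XStep.mem_of_rel (CXPath.sat_step.1 h)
  | .until _ _, _, _, _, h => by
    obtain ⟨_, _, h⟩ := TransGen.tail'_iff.1 (CXPath.sat_until.1 h)
    exact XStep.mem_of_rel h.1
  | .comp β γ, _, _, hs, h => by
    obtain ⟨_, hβ, hγ⟩ := CXPath.sat_comp.1 h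
    exact γ.mem_of_sat (β.mem_of_sat hs hβ) hγ
  | .or β γ, _, _, hs, h => (CXPath.sat_or.1 h).elim (β.mem_of_sat hs) (γ.mem_of_sat hs)

/-- The converse of a step. -/
def XStep.inv : XStep → XStep
  | .ch => .chI
  | .chI => .ch
  | .ns => .nsI
  | .nsI => .ns

theorem XStep.rel_inv {T : UTree A} {st : XStep} {s t : Node} :
    st.inv.rel T s t ↔ st.rel T t s := by
  cases st <;> rfl

-- In the conditional closure of a step, the condition moves from the end of each step to its
-- beginning, which shifts it by one node.
theorem CXPath.exists_converse : ∀ β : CXPath A, ∃ γ : CXPath A,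
    ∀ (T : UTree A) (s t : Node), γ.Sat T s t ↔ β.Sat T t s
  | .test α => ⟨.test α, fun T s t => by
      simp only [CXPath.sat_test]
      constructor <;> (rintro ⟨rfl, h⟩; exact ⟨rfl, h⟩)⟩
  | .step st => ⟨.step st.inv, fun T s t => by
      rw [CXPath.sat_step, CXPath.sat_step, XStep.rel_inv]⟩
  | .until st α => by
    refine ⟨.comp (.test α) (.comp (.or (.test (.or α (.not α))) (.until st.inv α))
      (.step st.inv)), fun T s t => ?_⟩
    have hflip := transGen_guard_left_iff (R := fun a b => st.rel T b a)
      (P := fun a => CXNode.Sat T a α) (x := s) (z := t)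
    simp only [CXPath.sat_comp, CXPath.sat_or, CXPath.sat_test, CXPath.sat_step, CXPath.sat_until,
      XStep.rel_inv, CXNode.Sat, em, and_true]
    rw [← transGen_swap]
    simp only [reflTransGen_iff_eq_or_transGen, and_comm (a := CXNode.Sat T _ α)] at hflip
    refine Iff.trans ?_ hflip.symm
    simp [eq_comm, and_comm]
  | .comp β γ => by
    obtain ⟨β', hβ⟩ := β.exists_converse
    obtain ⟨γ', hγ⟩ := γ.exists_converse
    exact ⟨.comp γ' β', fun T s t => by simp only [CXPath.sat_comp, hβ, hγ, and_comm]⟩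
  | .or β γ => by
    obtain ⟨β', hβ⟩ := β.exists_converse
    obtain ⟨γ', hγ⟩ := γ.exists_converse
    exact ⟨.or β' γ', fun T s t => by simp only [CXPath.sat_or, hβ, hγ]⟩

/-- A tree with a distinguished node. Definability is studied over all trees at once. -/
@[ext] structure PointedTree (A : Type) where
  tree : UTree A
  node : Node
  mem : node ∈ tree.dom

/-- A step of Conditional XPath, as a relation between pointed trees over the same tree. -/
def PointedTree.Step (st : XStep) (x y : PointedTree A) : Prop :=
  x.tree = y.tree ∧ st.rel x.tree x.node y.node

/-- The property `P` of pointed trees is defined by a node formula. -/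
def NodeDefinable (P : PointedTree A → Prop) : Prop :=
  ∃ α : CXNode A, ∀ x, P x ↔ α.Sat x.tree x.node

/-- The relation `R` between the nodes of a tree is defined by a path formula; pointed trees over
different trees are unrelated. -/
def PathDefinable (R : PointedTree A → PointedTree A → Prop) : Prop :=
  ∃ β : CXPath A, ∀ x y, R x y ↔ x.tree = y.tree ∧ β.Sat x.tree x.node y.node

/-- All fibres of `g` are definable by node formulas. This notion is meant for functions with
finitely many values. -/
def DefinableMap {ι : Type*} (g : PointedTree A → ι) : Prop := ∀ i, NodeDefinable (fun x => g x = i)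

namespace NodeDefinable

variable {P Q : PointedTree A → Prop}

theorem congr (h : NodeDefinable P) (hPQ : ∀ x, Q x ↔ P x) : NodeDefinable Q :=
  h.imp fun _ hα x => (hPQ x).trans (hα x)

theorem not (h : NodeDefinable P) : NodeDefinable (fun x => ¬ P x) := by
  obtain ⟨α, hα⟩ := h
  exact ⟨.not α, fun x => by simp only [hα, CXNode.Sat]⟩

theorem or (hP : NodeDefinable P) (hQ : NodeDefinable Q) :
    NodeDefinable (fun x => P x ∨ Q x) := by
  obtain ⟨α, hα⟩ := hP
  obtain ⟨β, hβ⟩ := hQ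
  exact ⟨.or α β, fun x => by simp only [hα, hβ, CXNode.Sat]⟩

theorem and (hP : NodeDefinable P) (hQ : NodeDefinable Q) :
    NodeDefinable (fun x => P x ∧ Q x) :=
  (hP.not.or hQ.not).not.congr fun x => by tauto

theorem const (p : Prop) : NodeDefinable (fun _ : PointedTree A => p) := by
  have hTrue : NodeDefinable (fun _ : PointedTree A => True) :=
    ⟨.or (.E (.step .ch)) (.not (.E (.step .ch))), fun x => by
      rw [CXNode.Sat, CXNode.Sat]
      exact iff_of_true trivial (em _)⟩
  by_cases h : p
  · exact hTrue.congr fun _ => iff_of_true h trivial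
  · exact hTrue.not.congr fun _ => iff_of_false h (not_not_intro trivial)

end NodeDefinable

theorem NodeDefinable.exists {ι : Type*} [Finite ι] {P : ι → PointedTree A → Prop}
    (h : ∀ i, NodeDefinable (P i)) : NodeDefinable (fun x => ∃ i, P i x) := by
  have hS (S : Set ι) : NodeDefinable (fun x => ∃ i ∈ S, P i x) := by
    induction S, S.toFinite using Set.Finite.induction_on with
    | empty => exact (NodeDefinable.const False).congr (by simp)
    | @insert i _ _ _ ih => exact ((h i).or ih).congr (by simp)
  exact (hS Set.univ).congr (by simp)

theorem NodeDefinable.forall {ι : Type*} [Finite ι] {P : ι → PointedTree A → Prop}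
    (h : ∀ i, NodeDefinable (P i)) : NodeDefinable (fun x => ∀ i, P i x) :=
  (NodeDefinable.exists fun i => (h i).not).not.congr (by simp)

namespace DefinableMap

variable {ι κ : Type*} {g : PointedTree A → ι}

theorem label : DefinableMap (fun x : PointedTree A => x.tree.label x.node) := fun a =>
  ⟨.lab a, fun x => by rw [CXNode.Sat, and_iff_right x.mem]⟩

theorem prodMk {g' : PointedTree A → κ} (h : DefinableMap g) (h' : DefinableMap g') :
    DefinableMap (fun x => (g x, g' x)) := fun i =>
  ((h i.1).and (h' i.2)).congr fun _ => Prod.ext_iff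

theorem comp [Finite ι] (h : DefinableMap g) (f : ι → κ) : DefinableMap (fun x => f (g x)) :=
  fun c => (NodeDefinable.exists fun i => (h i).and (NodeDefinable.const (f i = c))).congr
    fun x => by simp

theorem of_forall_eq_of_eq [Finite ι] (h : DefinableMap g) {f : PointedTree A → κ}
    (hf : ∀ x y, g x = g y → f x = f y) : DefinableMap f := fun c =>
  (NodeDefinable.exists fun i =>
    (h i).and (NodeDefinable.const (∃ y, g y = i ∧ f y = c))).congr fun x =>
    ⟨fun hx => ⟨g x, rfl, x, rfl, hx⟩, fun ⟨_, hx, y, hy, hc⟩ => hf x y (hx.trans hy.symm) ▸ hc⟩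

theorem set {α : Type*} [Finite α] {P : α → PointedTree A → Prop} (h : ∀ a, NodeDefinable (P a)) :
    DefinableMap (fun x => {a | P a x}) := fun S =>
  (NodeDefinable.forall fun a => ((h a).and (.const (a ∈ S))).or
    ((h a).not.and (.const (a ∉ S)))).congr fun _ => Set.ext_iff.trans
      (forall_congr' fun _ => iff_iff_and_or_not_and_not)

end DefinableMap

namespace PathDefinable

variable {R R' : PointedTree A → PointedTree A → Prop} {P Q : PointedTree A → Prop}

theorem congr (h : PathDefinable R) (hR : ∀ x y, R' x y ↔ R x y) : PathDefinable R' :=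
  h.imp fun _ hβ x y => (hR x y).trans (hβ x y)

theorem test (h : NodeDefinable P) : PathDefinable (fun x y => x = y ∧ P x) := by
  obtain ⟨α, hα⟩ := h
  exact ⟨.test α, fun x y => by
    simp only [CXPath.sat_test, PointedTree.ext_iff, hα, and_assoc]⟩

theorem eq : PathDefinable (Eq : PointedTree A → _) :=
  (test (.const True)).congr fun _ _ => (and_iff_left trivial).symm

theorem step (st : XStep) : PathDefinable (PointedTree.Step (A := A) st) :=
  ⟨.step st, fun x y => by rw [CXPath.sat_step, PointedTree.Step]⟩

theorem comp (h : PathDefinable R) (h' : PathDefinable R') : PathDefinable (Comp R R') := by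
  obtain ⟨β, hβ⟩ := h
  obtain ⟨γ, hγ⟩ := h'
  refine ⟨.comp β γ, fun x z => ?_⟩
  rw [CXPath.sat_comp]
  constructor
  · rintro ⟨y, hxy, hyz⟩
    rw [hβ] at hxy
    rw [hγ, ← hxy.1] at hyz
    exact ⟨hyz.1, y.node, hxy.2, hyz.2⟩
  · rintro ⟨hT, s, hxs, hsz⟩
    exact ⟨⟨x.tree, s, β.mem_of_sat x.mem hxs⟩, (hβ _ _).2 ⟨rfl, hxs⟩, (hγ _ _).2 ⟨hT, hsz⟩⟩

theorem or (h : PathDefinable R) (h' : PathDefinable R') :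
    PathDefinable (fun x y => R x y ∨ R' x y) := by
  obtain ⟨β, hβ⟩ := h
  obtain ⟨γ, hγ⟩ := h'
  exact ⟨.or β γ, fun x y => by simp only [hβ, hγ, CXPath.sat_or, and_or_left]⟩

theorem transGen (st : XStep) (h : NodeDefinable P) :
    PathDefinable (TransGen fun x y => PointedTree.Step st x y ∧ P y) := by
  obtain ⟨α, hα⟩ := h
  refine ⟨.until st α, fun x y => ?_⟩
  simp only [CXPath.sat_until, hα]
  constructor
  · intro h
    induction h with
    | single h => exact ⟨h.1.1, .single ⟨h.1.2, h.1.1 ▸ h.2⟩⟩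
    | tail _ h ih =>
      obtain ⟨⟨hT, hst⟩, hsat⟩ := h
      rw [← ih.1] at hT hst
      exact ⟨hT, ih.2.tail ⟨hst, hT ▸ hsat⟩⟩
  · obtain ⟨T, s, hs⟩ := x
    obtain ⟨T', t, ht⟩ := y
    rintro ⟨rfl, h⟩
    dsimp only at h
    induction h with
    | single h => exact .single ⟨⟨rfl, h.1⟩, h.2⟩
    | @tail t' t _ h ih =>
      have ht' : t' ∈ T.dom := XStep.mem_of_rel (XStep.rel_inv.2 h.1)
      exact (ih ht').tail ⟨⟨rfl, h.1⟩, h.2⟩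

theorem reflTransGen (h : PathDefinable (TransGen R)) : PathDefinable (ReflTransGen R) :=
  (eq.or h).congr fun x y => by rw [reflTransGen_iff_eq_or_transGen, eq_comm]

theorem swap (h : PathDefinable R) : PathDefinable (fun x y => R y x) := by
  obtain ⟨β, hβ⟩ := h
  obtain ⟨γ, hγ⟩ := β.exists_converse
  refine ⟨γ, fun x y => ?_⟩
  rw [hγ]
  refine (hβ y x).trans ?_
  rw [eq_comm]
  exact and_congr_right fun hT => by rw [hT]

theorem nodeDefinable_exists (h : PathDefinable R) : NodeDefinable (fun x => ∃ y, R x y) := by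
  obtain ⟨β, hβ⟩ := h
  refine ⟨.E β, fun x => ?_⟩
  rw [CXNode.Sat]
  exact ⟨fun ⟨y, hy⟩ => ⟨y.node, ((hβ _ _).1 hy).2⟩,
    fun ⟨t, ht⟩ => ⟨⟨x.tree, t, β.mem_of_sat x.mem ht⟩, (hβ _ _).2 ⟨rfl, ht⟩⟩⟩

theorem restrict (h : PathDefinable R) (hP : NodeDefinable P) (hQ : NodeDefinable Q) :
    PathDefinable (fun x y => P x ∧ R x y ∧ Q y) :=
  ((test hP).comp (h.comp (test hQ))).congr fun x y => by simp [Comp, and_assoc]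

theorem guard (h : PathDefinable R) (p : Prop) : PathDefinable (fun x y => p ∧ R x y) :=
  (h.restrict (.const p) (.const True)).congr (by simp)

end PathDefinable

theorem PathDefinable.exists {ι : Type*} [Finite ι] {R : ι → PointedTree A → PointedTree A → Prop}
    (h : ∀ i, PathDefinable (R i)) : PathDefinable (fun x y => ∃ i, R i x y) := by
  have hS (S : Set ι) : PathDefinable (fun x y => ∃ i ∈ S, R i x y) := by
    induction S, S.toFinite using Set.Finite.induction_on with
    | empty => exact (PathDefinable.eq.guard False).congr (by simp)
    | @insert i _ _ _ ih => exact ((h i).or ih).congr (by simp)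
  exact (hS Set.univ).congr (by simp)

/-! ### Products along deterministic steps -/

/-- Some `S`-path leads from `x` to `y`, and the product of the values of `f` along it, in order,
with `x` included and `y` excluded, is `m`. -/
inductive PathProduct {α M : Type*} [Monoid M] (S : α → α → Prop) (f : α → M) : M → α → α → Prop
  | nil (x) : PathProduct S f 1 x x
  | cons {m x y z} : S x y → PathProduct S f m y z → PathProduct S f (f x * m) x z

namespace PathProduct

variable {α M : Type*} [Monoid M] {S S' : α → α → Prop} {f : α → M} {p q : M} {x y z : α}

theorem append (h : PathProduct S f p x y) (h' : PathProduct S f q y z) :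
    PathProduct S f (p * q) x z := by
  induction h with
  | nil => rwa [one_mul]
  | cons h _ ih =>
    rw [mul_assoc]
    exact .cons h (ih h')

theorem mono (h : PathProduct S f p x y) (hS : ∀ x y, S x y → S' x y) :
    PathProduct S' f p x y := by
  induction h with
  | nil => exact .nil _
  | cons h _ ih => exact .cons (hS _ _ h) ih

theorem single (h : S x y) : PathProduct S f (f x) x y := by
  simpa only [mul_one] using cons (f := f) h (.nil y)

theorem iff_of_forall_eq_one (hf : ∀ x y, S x y → f x = 1) :
    PathProduct S f p x y ↔ p = 1 ∧ ReflTransGen S x y := by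
  constructor
  · intro h
    induction h with
    | nil => exact ⟨rfl, .refl⟩
    | cons h _ ih => exact ⟨by rw [hf _ _ h, ih.1, one_mul], .head h ih.2⟩
  · rintro ⟨rfl, h⟩
    induction h using ReflTransGen.head_induction_on with
    | refl => exact .nil _
    | head h _ ih => simpa only [hf _ _ h, mul_one] using ih.cons h

end PathProduct

section Compression

variable {α M : Type*} (S : α → α → Prop) (f : α → M) (c : M)

/-- The step `S`, restricted to starting points whose letter is not `c`. -/
def AvoidingStep (x y : α) : Prop := f x ≠ c ∧ S x y

variable {S f c} in
theorem AvoidingStep.step {x y : α} (h : AvoidingStep S f c x y) : S x y := h.2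

variable [Monoid M]

/-- The points `x` and `y` carry consecutive occurrences of the letter `c`, and `p` is the product
of the letters strictly between them. -/
def IsBlock (p : M) (x y : α) : Prop :=
  f x = c ∧ (Comp S (PathProduct (AvoidingStep S f c) f p)) x y ∧ f y = c

/-- The step from an occurrence of the letter `c` to the next one. -/
def JumpStep (x y : α) : Prop := ∃ p, IsBlock S f c p x y

/-- The element `c p c` of the local divisor at `c`. -/
def LocalDivisor.sandwich {c : M} (p : M) : LocalDivisor c :=
  ⟨c * p * c, ⟨c * p, rfl⟩, ⟨p * c, mul_assoc _ _ _⟩⟩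

open Classical in
/-- The letter of the compressed word at an occurrence `x` of `c`: the element `c p c` of the local
divisor, where `p` is the product up to the next `c`, and the unit if there is no next `c`. -/
noncomputable def blockLetter (x : α) : LocalDivisor c :=
  if h : ∃ p y, IsBlock S f c p x y then .sandwich h.choose else 1

variable {S f c}

theorem PathProduct.avoidingStep_unique (hS : Relator.RightUnique S) {p p' : M} {z y y' : α}
    (h : PathProduct (AvoidingStep S f c) f p z y) (hy : f y = c)
    (h' : PathProduct (AvoidingStep S f c) f p' z y') (hy' : f y' = c) : p = p' ∧ y = y' := by
  induction h generalizing p' with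
  | nil =>
    cases h' with
    | nil => exact ⟨rfl, rfl⟩
    | cons h _ => exact absurd hy h.1
  | cons hstep _ ih =>
    cases h' with
    | nil => exact absurd hy' hstep.1
    | cons hstep' h' =>
      obtain rfl := hS hstep.2 hstep'.2
      obtain ⟨rfl, rfl⟩ := ih hy h'
      exact ⟨rfl, rfl⟩

theorem IsBlock.unique (hS : Relator.RightUnique S) {p p' : M} {x y y' : α}
    (h : IsBlock S f c p x y) (h' : IsBlock S f c p' x y') : p = p' ∧ y = y' := by
  obtain ⟨-, ⟨z, hxz, hzy⟩, hy⟩ := h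
  obtain ⟨-, ⟨z', hxz', hzy'⟩, hy'⟩ := h'
  obtain rfl := hS hxz hxz'
  exact hzy.avoidingStep_unique hS hy hzy' hy'

theorem rightUnique_jumpStep (hS : Relator.RightUnique S) :
    Relator.RightUnique (JumpStep S f c) :=
  fun _ _ _ ⟨_, h⟩ ⟨_, h'⟩ => (h.unique hS h').2

theorem blockLetter_eq_sandwich (hS : Relator.RightUnique S) {p : M} {x y : α}
    (h : IsBlock S f c p x y) : blockLetter S f c x = .sandwich p := by
  have hex : ∃ p y, IsBlock S f c p x y := ⟨p, y, h⟩
  rw [blockLetter, dif_pos hex, (h.unique hS hex.choose_spec.choose_spec).1]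

theorem blockLetter_mul (hS : Relator.RightUnique S) {p : M} {x y : α}
    (h : IsBlock S f c p x y) (v : LocalDivisor c) :
    (blockLetter S f c x * v).1 = c * p * v.1 :=
  LocalDivisor.coe_mul _ _ (congrArg Subtype.val (blockLetter_eq_sandwich hS h))

theorem blockLetter_eq_iff (hS : Relator.RightUnique S) {v : LocalDivisor c} {x : α} :
    blockLetter S f c x = v ↔ (∃ p, (∃ y, IsBlock S f c p x y) ∧ .sandwich p = v) ∨
      (¬ ∃ p y, IsBlock S f c p x y) ∧ 1 = v := by
  by_cases h : ∃ p y, IsBlock S f c p x y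
  · obtain ⟨p, y, hp⟩ := h
    rw [blockLetter_eq_sandwich hS hp]
    constructor
    · exact fun hv => .inl ⟨p, ⟨y, hp⟩, hv⟩
    · rintro (⟨q, ⟨y', hq⟩, hv⟩ | ⟨hn, -⟩)
      · rwa [(hp.unique hS hq).1]
      · exact absurd ⟨p, y, hp⟩ hn
  · rw [blockLetter, dif_neg h]
    refine ⟨fun hv => .inr ⟨h, hv⟩, ?_⟩
    rintro (⟨q, hq, -⟩ | ⟨-, hv⟩)
    · exact absurd ⟨q, hq⟩ h
    · exact hv

theorem transGen_of_pathProduct_avoidingStep {P : α → Prop} {p : M} {a b w : α}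
    (h : PathProduct (AvoidingStep S f c) f p a b) (hwa : S w a) (hb : P b) :
    TransGen (fun x y => S x y ∧ (f y ≠ c ∨ P y)) w b := by
  induction h generalizing w with
  | nil => exact .single ⟨hwa, .inr hb⟩
  | cons h _ ih => exact .head ⟨hwa, .inl h.1⟩ (ih h.2 hb)

theorem exists_jumpStep_of_reflTransGen {P : α → Prop} {a y : α} (hy : f y = c)
    (h : ReflTransGen (fun x y => S x y ∧ (f y ≠ c ∨ P y)) a y) :
    ∃ z, f z = c ∧ (∃ p, PathProduct (AvoidingStep S f c) f p a z) ∧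
      ReflTransGen (fun x y => JumpStep S f c x y ∧ P y) z y ∧ (f a ≠ c ∨ P a → P z) := by
  induction h using ReflTransGen.head_induction_on with
  | refl => exact ⟨y, hy, ⟨1, .nil _⟩, .refl, (·.resolve_left (not_not_intro hy))⟩
  | @head a b h _ ih =>
    obtain ⟨z, hz, ⟨p, hp⟩, hzy, hPz⟩ := ih
    by_cases ha : f a = c
    · exact ⟨a, ha, ⟨1, .nil _⟩, .head ⟨⟨p, ha, ⟨b, h.1, hp⟩, hz⟩, hPz h.2⟩ hzy,
        (·.resolve_left (not_not_intro ha))⟩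
    · exact ⟨z, hz, ⟨_, .cons ⟨ha, h.1⟩ hp⟩, hzy, fun _ => hPz h.2⟩

theorem transGen_jumpStep_iff {P : α → Prop} {x y : α} :
    TransGen (fun x y => JumpStep S f c x y ∧ P y) x y ↔
      f x = c ∧ TransGen (fun x y => S x y ∧ (f y ≠ c ∨ P y)) x y ∧ f y = c := by
  constructor
  · intro h
    induction h with
    | single h =>
      obtain ⟨⟨p, hx, ⟨z, hxz, hzy⟩, hy⟩, hP⟩ := h
      exact ⟨hx, transGen_of_pathProduct_avoidingStep hzy hxz hP, hy⟩
    | tail _ h ih =>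
      obtain ⟨⟨p, -, ⟨z, hxz, hzy⟩, hy⟩, hP⟩ := h
      exact ⟨ih.1, ih.2.1.trans (transGen_of_pathProduct_avoidingStep hzy hxz hP), hy⟩
  · rintro ⟨hx, h, hy⟩
    obtain ⟨b, hxb, hby⟩ := TransGen.head'_iff.1 h
    obtain ⟨z, hz, ⟨p, hp⟩, hzy, hPz⟩ := exists_jumpStep_of_reflTransGen hy hby
    exact .head' ⟨⟨p, hx, ⟨b, hxb.1, hp⟩, hz⟩, hPz hxb.2⟩ hzy

theorem PathProduct.of_jumpStep (hS : Relator.RightUnique S) {v : LocalDivisor c} {x y z : α}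
    (h : PathProduct (JumpStep S f c) (blockLetter S f c) v x y) (hy : f y = c) (hyz : S y z) :
    PathProduct S f v.1 x z := by
  induction h with
  | nil => exact hy ▸ .single hyz
  | cons h _ ih =>
    obtain ⟨p, hblock⟩ := h
    rw [blockLetter_mul hS hblock]
    obtain ⟨hx, ⟨w, hxw, hw⟩, -⟩ := hblock
    simpa only [hx] using (PathProduct.cons hxw (hw.mono fun _ _ => AvoidingStep.step)).append
      (ih hy hyz)

-- A path either avoids the letter `c` or splits into a part before the first `c`, a part from the
-- first to the last `c`, and a part after it; the middle part is a word over the local divisor.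
theorem pathProduct_iff_avoidingStep_or (hS : Relator.RightUnique S) {m : M} {x y : α} :
    PathProduct S f m x y ↔ PathProduct (AvoidingStep S f c) f m x y ∨
      ∃ (p : M) (v : LocalDivisor c) (q : M), p * v.1 * q = m ∧
        Comp (PathProduct (AvoidingStep S f c) f p)
          (Comp (fun x₁ x₂ => f x₁ = c ∧
              PathProduct (JumpStep S f c) (blockLetter S f c) v x₁ x₂ ∧ f x₂ = c)
            (Comp S (PathProduct (AvoidingStep S f c) f q))) x y := by
  constructor
  · intro h
    induction h with
    | nil => exact .inl (.nil _)
    | @cons m x x' y h _ ih =>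
      by_cases hx : f x = c
      · rcases ih with ih | ⟨p, v, q, rfl, x₁, hp, x₂, ⟨hx₁, hv, hx₂⟩, hq⟩
        · exact .inr ⟨1, 1, m, by rw [LocalDivisor.coe_one, one_mul, hx], x, .nil _, x,
            ⟨hx, .nil _, hx⟩, x', h, ih⟩
        · have hblock : IsBlock S f c p x x₁ := ⟨hx, ⟨x', h, hp⟩, hx₁⟩
          refine .inr ⟨1, blockLetter S f c x * v, q, ?_, x, .nil _, x₂,
            ⟨hx, .cons ⟨p, hblock⟩ hv, hx₂⟩, hq⟩
          simp only [blockLetter_mul hS hblock, hx, one_mul, mul_assoc]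
      · rcases ih with ih | ⟨p, v, q, rfl, x₁, hp, hrest⟩
        · exact .inl (.cons ⟨hx, h⟩ ih)
        · exact .inr ⟨f x * p, v, q, by simp only [mul_assoc], x₁, .cons ⟨hx, h⟩ hp, hrest⟩
  · rintro (h | ⟨p, v, q, rfl, x₁, hp, x₂, ⟨-, hv, hx₂⟩, z, hxz, hq⟩)
    · exact h.mono fun _ _ => AvoidingStep.step
    · exact ((hp.mono fun _ _ => AvoidingStep.step).append (hv.of_jumpStep hS hx₂ hxz)).append
        (hq.mono fun _ _ => AvoidingStep.step)

end Compression


/-- A deterministic step that is definable by a path formula and has definable conditional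
transitive closures. Besides the deterministic steps of a tree, this covers the derived steps
`AvoidingStep` and `JumpStep`. -/
structure IsDeterministicStep (S : PointedTree A → PointedTree A → Prop) : Prop where
  rightUnique : Relator.RightUnique S
  pathDefinable : PathDefinable S
  transGen : ∀ P, NodeDefinable P → PathDefinable (TransGen fun x y => S x y ∧ P y)

namespace IsDeterministicStep

variable {M : Type*} {S : PointedTree A → PointedTree A → Prop} {f : PointedTree A → M} {c : M}

theorem reflTransGen (hS : IsDeterministicStep S) : PathDefinable (ReflTransGen S) :=
  .reflTransGen ((hS.transGen _ (.const True)).congr (by simp only [and_true, implies_true]))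

theorem avoidingStep (hS : IsDeterministicStep S) (hf : DefinableMap f) :
    IsDeterministicStep (AvoidingStep S f c) where
  rightUnique _ _ _ h h' := hS.rightUnique h.2 h'.2
  pathDefinable := (hS.pathDefinable.restrict (hf c).not (.const True)).congr fun x y => by
    rw [AvoidingStep, and_true]
  transGen P hP := by
    have hclosure := hS.transGen _ (hP.and (hf c).not)
    refine ((hclosure.reflTransGen.comp hS.pathDefinable).restrict (hf c).not hP).congr
      fun x y => ?_
    simp only [AvoidingStep, and_assoc, transGen_guard_left_iff (P := fun a => f a ≠ c), Comp,
      ne_eq, ← exists_and_right]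

variable [Monoid M]

theorem isBlock (hS : IsDeterministicStep S) (hf : DefinableMap f)
    (havoid : ∀ p, PathDefinable (PathProduct (AvoidingStep S f c) f p)) (p : M) :
    PathDefinable (IsBlock S f c p) :=
  (hS.pathDefinable.comp (havoid p)).restrict (hf c) (hf c)

theorem jumpStep [Finite M] (hS : IsDeterministicStep S) (hf : DefinableMap f)
    (havoid : ∀ p, PathDefinable (PathProduct (AvoidingStep S f c) f p)) :
    IsDeterministicStep (JumpStep S f c) where
  rightUnique := rightUnique_jumpStep hS.rightUnique
  pathDefinable := PathDefinable.exists (hS.isBlock hf havoid)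
  transGen _ hP :=
    ((hS.transGen _ ((hf c).not.or hP)).restrict (hf c) (hf c)).congr fun _ _ =>
      transGen_jumpStep_iff

theorem definableMap_blockLetter [Finite M] (hS : IsDeterministicStep S) (hf : DefinableMap f)
    (havoid : ∀ p, PathDefinable (PathProduct (AvoidingStep S f c) f p)) :
    DefinableMap (blockLetter S f c) := by
  have hblock (p : M) := (hS.isBlock hf havoid p).nodeDefinable_exists
  exact fun v => ((NodeDefinable.exists fun p => (hblock p).and (.const _)).or
    ((NodeDefinable.exists hblock).not.and (.const _))).congr fun _ =>
      blockLetter_eq_iff hS.rightUnique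

theorem pathProduct_of_letter [Finite M] (hS : IsDeterministicStep S) (hf : DefinableMap f)
    (havoid : ∀ p, PathDefinable (PathProduct (AvoidingStep S f c) f p))
    (hjump : ∀ v, PathDefinable (PathProduct (JumpStep S f c) (blockLetter S f c) v)) (m : M) :
    PathDefinable (PathProduct S f m) :=
  ((havoid m).or <| PathDefinable.exists fun p => PathDefinable.exists fun v =>
    PathDefinable.exists fun q => PathDefinable.guard ((havoid p).comp
      (((hjump v).restrict (hf c) (hf c)).comp (hS.pathDefinable.comp (havoid q)))) _).congr
    fun _ _ => pathProduct_iff_avoidingStep_or hS.rightUnique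

-- Lexicographic induction on the size of the monoid and the set `G` of letters that occur. Fixing
-- a letter `c ≠ 1` in `G`, the parts without `c` have fewer letters, and the compressed word lives
-- in the smaller monoid `LocalDivisor c`.
theorem pathProduct_of_card.{u} (n : ℕ) : ∀ (M : Type u) [Monoid M] [Finite M], Nat.card M = n →
    (∃ r, ∀ x : M, x ^ (r + 1) = x ^ r) →
    ∀ (G : Set M) (S : PointedTree A → PointedTree A → Prop) (f : PointedTree A → M),
      IsDeterministicStep S → DefinableMap f → (∀ x y, S x y → f x ∈ G) →
        ∀ m, PathDefinable (PathProduct S f m) := by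
  induction n using Nat.strong_induction_on with
  | _ n ihM =>
    rintro M _ _ rfl ⟨r, hr⟩ G
    induction G using WellFoundedLT.induction with
    | _ G ihG =>
      intro S f hS hf hfG
      by_cases hG : ∃ c ∈ G, c ≠ 1
      · obtain ⟨c, hcG, hc⟩ := hG
        have havoid : ∀ p, PathDefinable (PathProduct (AvoidingStep S f c) f p) :=
          ihG (G \ {c}) (Set.sdiff_singleton_ssubset.2 hcG) _ f (hS.avoidingStep hf) hf
            fun x y h => ⟨hfG x y h.2, h.1⟩
        have hjump : ∀ v, PathDefinable (PathProduct (JumpStep S f c) (blockLetter S f c) v) :=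
          ihM _ (LocalDivisor.card_lt (hr c) hc) (LocalDivisor c) rfl
            ⟨r, LocalDivisor.pow_succ_eq_pow hr⟩ Set.univ _ _ (hS.jumpStep hf havoid)
            (hS.definableMap_blockLetter hf havoid) fun _ _ _ => Set.mem_univ _
        exact hS.pathProduct_of_letter hf havoid hjump
      · push Not at hG
        exact fun m => (hS.reflTransGen.guard (m = 1)).congr fun x y =>
          PathProduct.iff_of_forall_eq_one fun x y h => hG _ (hfG x y h)

theorem pathProduct [Finite M] (haper : ∃ r, ∀ x : M, x ^ (r + 1) = x ^ r)
    (hS : IsDeterministicStep S) (hf : DefinableMap f) (m : M) :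
    PathDefinable (PathProduct S f m) :=
  pathProduct_of_card _ M rfl haper Set.univ S f hS hf (fun _ _ _ => Set.mem_univ _) m

end IsDeterministicStep

theorem PathProduct.eq_of_forall_eq_mul {α M : Type*} [Monoid M] {S : α → α → Prop} {f g : α → M}
    (hmul : ∀ x y, S x y → g x = f x * g y) (hone : ∀ x, (∀ y, ¬ S x y) → g x = 1) {p : M}
    {x y : α} (h : PathProduct S f p x y) (hy : ∀ z, ¬ S y z) : g x = p := by
  induction h with
  | nil => exact hone _ hy
  | cons h _ ih => rw [hmul _ _ h, ih hy]

theorem PathProduct.exists_maximal {α M : Type*} [Monoid M] {S : α → α → Prop}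
    (hwf : WellFounded (Function.swap S)) (f : α → M) (x : α) :
    ∃ m y, PathProduct S f m x y ∧ ∀ z, ¬ S y z := by
  induction x using hwf.induction with
  | _ x ih =>
    by_cases h : ∃ y, S x y
    · obtain ⟨y, hxy⟩ := h
      obtain ⟨m, z, hm, hz⟩ := ih y hxy
      exact ⟨_, z, .cons hxy hm, hz⟩
    · exact ⟨1, x, .nil x, not_exists.1 h⟩

open Classical in
/-- The value of `f` after one step `S`, and `1` where no step is possible. -/
noncomputable def nextValue {α M : Type*} [One M] (S : α → α → Prop) (f : α → M) (x : α) : M :=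
  if h : ∃ y, S x y then f h.choose else 1

theorem nextValue_eq {α M : Type*} [One M] {S : α → α → Prop} (hS : Relator.RightUnique S)
    (f : α → M) {x y : α} (hxy : S x y) : nextValue S f x = f y := by
  have h : ∃ y, S x y := ⟨y, hxy⟩
  rw [nextValue, dif_pos h, hS h.choose_spec hxy]

theorem DefinableMap.nextValue {M : Type*} [One M] {S : PointedTree A → PointedTree A → Prop}
    {f : PointedTree A → M} (hS : IsDeterministicStep S) (hf : DefinableMap f) :
    DefinableMap (nextValue S f) := by
  intro m
  have hvalue := (hS.pathDefinable.restrict (.const True) (hf m)).nodeDefinable_exists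
  refine (hvalue.or (hS.pathDefinable.nodeDefinable_exists.not.and
    (NodeDefinable.const (1 = m)))).congr fun x => ?_
  by_cases h : ∃ y, S x y
  · obtain ⟨y, hxy⟩ := h
    rw [nextValue_eq hS.rightUnique f hxy]
    constructor
    · exact fun hm => .inl ⟨y, trivial, hxy, hm⟩
    · rintro (⟨z, -, hxz, hz⟩ | ⟨hx, -⟩)
      · rwa [hS.rightUnique hxy hxz]
      · exact absurd ⟨y, hxy⟩ hx
  · rw [UnrankedTrees.nextValue, dif_neg h]
    exact ⟨fun hm => .inr ⟨h, hm⟩, fun hm =>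
      hm.elim (fun ⟨y, _, hxy, _⟩ => absurd ⟨y, hxy⟩ h) And.right⟩

theorem DefinableMap.of_eq_mul {M : Type*} [Monoid M] [Finite M]
    {S : PointedTree A → PointedTree A → Prop} {f g : PointedTree A → M}
    (haper : ∃ r, ∀ x : M, x ^ (r + 1) = x ^ r) (hS : IsDeterministicStep S)
    (hwf : WellFounded (Function.swap S)) (hf : DefinableMap f)
    (hmul : ∀ x y, S x y → g x = f y * g y) (hone : ∀ x, (∀ y, ¬ S x y) → g x = 1) :
    DefinableMap g := by
  have hmul' (x y : PointedTree A) (hxy : S x y) : g x = UnrankedTrees.nextValue S f x * g y := by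
    rw [nextValue_eq hS.rightUnique f hxy, hmul x y hxy]
  intro m
  refine ((hS.pathProduct haper (hf.nextValue hS) m).restrict (.const True)
    hS.pathDefinable.nodeDefinable_exists.not).nodeDefinable_exists.congr fun x => ?_
  simp only [true_and, not_exists]
  constructor
  · rintro rfl
    obtain ⟨m, y, hm, hy⟩ := PathProduct.exists_maximal hwf (UnrankedTrees.nextValue S f) x
    exact ⟨y, by rwa [hm.eq_of_forall_eq_mul hmul' hone hy], hy⟩
  · exact fun ⟨y, hm, hy⟩ => hm.eq_of_forall_eq_mul hmul' hone hy

/-! ### Regions of trees -/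

/-- The strict version of the sibling order. -/
def SiblingLt (s t : Node) : Prop := ∃ u i j, s = u ++ [i] ∧ t = u ++ [j] ∧ i < j

theorem SiblingLt.trans {s t u : Node} (h : SiblingLt s t) (h' : SiblingLt t u) :
    SiblingLt s u := by
  obtain ⟨p, i, j, rfl, rfl, hij⟩ := h
  obtain ⟨q, j', k, heq, rfl, hjk⟩ := h'
  obtain ⟨rfl, hj⟩ := List.append_inj' heq rfl
  exact ⟨p, i, k, rfl, rfl, hij.trans (List.singleton_inj.1 hj ▸ hjk)⟩

theorem siblingLt_append_left_iff {s p : Node} {i : ℕ} :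
    SiblingLt s (p ++ [i]) ↔ ∃ j < i, s = p ++ [j] := by
  constructor
  · rintro ⟨q, j, i', rfl, heq, hji⟩
    obtain ⟨rfl, hi⟩ := List.append_inj' heq rfl
    exact ⟨j, List.singleton_inj.1 hi ▸ hji, rfl⟩
  · rintro ⟨j, hji, rfl⟩
    exact ⟨p, j, i, rfl, rfl, hji⟩

theorem siblingLt_append_right_iff {s p : Node} {i : ℕ} :
    SiblingLt (p ++ [i]) s ↔ ∃ j > i, s = p ++ [j] := by
  constructor
  · rintro ⟨q, i', j, heq, rfl, hij⟩
    obtain ⟨rfl, hi⟩ := List.append_inj' heq rfl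
    exact ⟨j, List.singleton_inj.1 hi ▸ hij, rfl⟩
  · rintro ⟨j, hij, rfl⟩
    exact ⟨p, i, j, rfl, rfl, hij⟩

theorem SiblingLt.not_prefix {s t z : Node} (h : SiblingLt s t) (hs : s <+: z) : ¬ t <+: z := by
  intro ht
  obtain ⟨u, i, j, rfl, rfl, hij⟩ := h
  have := List.prefix_of_prefix_length_le hs ht (by simp)
  simp [hij.ne] at this

theorem SiblingLt.prefix_right {s x y : Node} (h : SiblingLt x y) (hs : s <+: x) (hne : s ≠ x) :
    s <+: y := by
  obtain ⟨u, i, j, rfl, rfl, -⟩ := h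
  exact ((List.prefix_concat_iff.1 hs).resolve_left hne).trans (List.prefix_append _ _)

theorem SiblingLt.prefix_left {s x y : Node} (h : SiblingLt x y) (hs : s <+: y) (hne : s ≠ y) :
    s <+: x := by
  obtain ⟨u, i, j, rfl, rfl, -⟩ := h
  exact ((List.prefix_concat_iff.1 hs).resolve_left hne).trans (List.prefix_append _ _)

/-- The names of the two binary relations in first-order logic over trees. -/
inductive TreeRel
  | desc
  | sib

instance : Finite TreeRel :=
  Finite.of_surjective (fun b : Bool => if b then TreeRel.desc else TreeRel.sib)
    (by rintro (_ | _) <;> simp)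

/-- The descendant relation and the strict sibling order. -/
def TreeRel.Holds : TreeRel → Node → Node → Prop
  | .desc => (· <+: ·)
  | .sib => SiblingLt

/-- A set of nodes some of which are marked. A region names the same part of every tree: it need
not be contained in the domain. -/
@[ext] structure Region where
  nodes : Set Node
  marked : Set Node
  marked_subset : marked ⊆ nodes

namespace Region

instance : Union Region :=
  ⟨fun X Y => ⟨X.nodes ∪ Y.nodes, X.marked ∪ Y.marked,
    Set.union_subset_union X.marked_subset Y.marked_subset⟩⟩

/-- The structure induced by a tree on a region. -/
def restrict (X : Region) (T : UTree A) : MarkedStructure TreeRel A where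
  carrier := {z // z ∈ T.dom ∧ z ∈ X.nodes}
  rel r a b := r.Holds a b
  label a := T.label a
  marked a := a.1 ∈ X.marked

/-- In every tree, the structure on `X ∪ Y` is the gluing along `χ` of those on `X` and `Y`. -/
structure Glues (χ : MarkedStructure.Gluing TreeRel) (X Y : Region) : Prop where
  disjoint : Disjoint X.nodes Y.nodes
  leftToRight : ∀ x ∈ X.nodes, ∀ y ∈ Y.nodes, ∀ r : TreeRel,
    r.Holds x y ↔ χ.leftToRight r (x ∈ X.marked) (y ∈ Y.marked)
  rightToLeft : ∀ x ∈ X.nodes, ∀ y ∈ Y.nodes, ∀ r : TreeRel,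
    r.Holds y x ↔ χ.rightToLeft r (y ∈ Y.marked) (x ∈ X.marked)

variable {χ : MarkedStructure.Gluing TreeRel} {X Y X' Y' : Region} {T T' : UTree A} {k : ℕ}

/-- The inclusions of the two parts of a union of regions. -/
def inclusion (X Y : Region) (T : UTree A) :
    ∀ b, MarkedStructure.Gluing.pair (X.restrict T) (Y.restrict T) b → (X ∪ Y).restrict T
  | false => fun a => ⟨a.1, a.2.1, .inl a.2.2⟩
  | true => fun a => ⟨a.1, a.2.1, .inr a.2.2⟩

theorem Glues.isSum (h : Glues χ X Y) (T : UTree A) :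
    MarkedStructure.IsSum (MarkedStructure.Gluing.pair (X.restrict T) (Y.restrict T))
      ((X ∪ Y).restrict T) (inclusion X Y T) χ.cross where
  surjective := by
    rintro ⟨a, ha, haX | haY⟩
    · exact ⟨false, ⟨a, ha, haX⟩, rfl⟩
    · exact ⟨true, ⟨a, ha, haY⟩, rfl⟩
  injective := by
    rintro (_ | _) a b hab <;> exact Subtype.ext (Subtype.ext_iff.1 hab :)
  disjoint := by
    rintro (_ | _) (_ | _) a b hab
    · rfl
    · exact (h.disjoint.ne_of_mem a.2.2 b.2.2 (congrArg Subtype.val hab)).elim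
    · exact (h.disjoint.ne_of_mem b.2.2 a.2.2 (congrArg Subtype.val hab).symm).elim
    · rfl
  label_eq := by rintro (_ | _) a <;> rfl
  marked_iff := by
    rintro (_ | _) a
    · exact or_iff_left fun ha => h.disjoint.notMem_of_mem_left a.2.2 (Y.marked_subset ha)
    · exact or_iff_right fun ha => h.disjoint.notMem_of_mem_right a.2.2 (X.marked_subset ha)
  rel_iff := by rintro (_ | _) r a b <;> rfl
  cross_iff := by
    rintro (_ | _) (_ | _) hij r a b
    · exact absurd rfl hij
    · exact h.leftToRight _ a.2.2 _ b.2.2 r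
    · exact h.rightToLeft _ b.2.2 _ a.2.2 r
    · exact absurd rfl hij

theorem Glues.kType_eq_mul (h : Glues χ X Y) (T : UTree A) :
    ((X ∪ Y).restrict T).kType k χ = (X.restrict T).kType k χ * (Y.restrict T).kType k χ :=
  MarkedStructure.IsSum.kType_eq_mul (h.isSum T)

/-- Duplicator wins the `k`-round game between the region `X` of `T` and the region `X'` of `T'`
from the position `q`. -/
def BackForth (k : ℕ) (T T' : UTree A) (X X' : Region) (q : SetRel Node Node) : Prop :=
  MarkedStructure.BackForth (X.restrict T) (X'.restrict T') k {a | (a.1.1, a.2.1) ∈ q}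

theorem BackForth.union {q₁ q₂ q : SetRel Node Node} (h : Glues χ X Y) (h' : Glues χ X' Y')
    (h₁ : BackForth k T T' X X' q₁) (h₂ : BackForth k T T' Y Y' q₂)
    (hq : ∀ a b, (a, b) ∈ q → (a ∈ X.nodes ∧ b ∈ X'.nodes ∧ (a, b) ∈ q₁) ∨
      (a ∈ Y.nodes ∧ b ∈ Y'.nodes ∧ (a, b) ∈ q₂)) :
    BackForth k T T' (X ∪ Y) (X' ∪ Y') q := by
  let p : ∀ b, SetRel (MarkedStructure.Gluing.pair (X.restrict T) (Y.restrict T) b)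
      (MarkedStructure.Gluing.pair (X'.restrict T') (Y'.restrict T') b)
    | false => {a | (a.1.1, a.2.1) ∈ q₁}
    | true => {a | (a.1.1, a.2.1) ∈ q₂}
  refine (MarkedStructure.IsSum.backForth (h.isSum T) (h'.isSum T') (p := p) ?_).mono ?_
  · rintro (_ | _) <;> assumption
  · rintro ⟨⟨a, ha, _⟩, ⟨b, hb, _⟩⟩ hab
    obtain ⟨haX, hbX, hab⟩ | ⟨haY, hbY, hab⟩ := hq a b hab
    · exact Set.mem_iUnion.2 ⟨false, (⟨a, ha, haX⟩, ⟨b, hb, hbX⟩), hab, rfl⟩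
    · exact Set.mem_iUnion.2 ⟨true, (⟨a, ha, haY⟩, ⟨b, hb, hbY⟩), hab, rfl⟩

theorem backForth_succ_iff {q : SetRel Node Node} : BackForth (k + 1) T T' X X' q ↔
    BackForth k T T' X X' q ∧
      (∀ a ∈ T.dom, a ∈ X.nodes → ∃ b ∈ T'.dom, b ∈ X'.nodes ∧
        BackForth k T T' X X' (insert (a, b) q)) ∧
      ∀ b ∈ T'.dom, b ∈ X'.nodes → ∃ a ∈ T.dom, a ∈ X.nodes ∧
        BackForth k T T' X X' (insert (a, b) q) := by
  have hinsert (a : X.restrict T) (b : X'.restrict T') :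
      BackForth k T T' X X' (insert (a.1, b.1) q) ↔
        MarkedStructure.BackForth (X.restrict T) (X'.restrict T') k
          (insert (a, b) {c | (c.1.1, c.2.1) ∈ q}) := by
    rw [BackForth]
    congr! 1
    exact Set.ext fun c => or_congr_left ((Prod.ext_iff.trans
      (and_congr Subtype.ext_iff Subtype.ext_iff).symm).trans Prod.ext_iff.symm)
  refine and_congr_right fun _ => and_congr ?_ ?_
  · constructor
    · intro h a ha haX
      obtain ⟨b, hb⟩ := h ⟨a, ha, haX⟩
      exact ⟨b.1, b.2.1, b.2.2, (hinsert _ b).2 hb⟩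
    · intro h a
      obtain ⟨b, hb, hbX, hab⟩ := h a.1 a.2.1 a.2.2
      exact ⟨⟨b, hb, hbX⟩, (hinsert a _).1 hab⟩
  · constructor
    · intro h b hb hbX
      obtain ⟨a, ha⟩ := h ⟨b, hb, hbX⟩
      exact ⟨a.1, a.2.1, a.2.2, (hinsert a _).2 ha⟩
    · intro h b
      obtain ⟨a, ha, haX, hab⟩ := h b.1 b.2.1 b.2.2
      exact ⟨⟨a, ha, haX⟩, (hinsert _ b).1 hab⟩

theorem kType_eq_iff :
    (X.restrict T).kType k χ = (X'.restrict T').kType k χ ↔ BackForth k T T' X X' ∅ :=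
  MarkedStructure.kType_eq_iff

/-- The region `X` with its marks replaced by `S`. -/
def remark (X : Region) (S : Set Node) : Region := ⟨X.nodes, X.nodes ∩ S, Set.inter_subset_left⟩

theorem BackForth.remark_empty {q : SetRel Node Node} (h : BackForth k T T' X X' q) :
    BackForth k T T' (X.remark ∅) (X'.remark ∅) q := by
  refine MarkedStructure.BackForth.remark h (Set.empty_subset _) (fun a => ?_) fun b => ?_
  · exact iff_of_false And.right fun ⟨_, hb⟩ => hb
  · exact iff_of_false And.right fun ⟨_, ha⟩ => ha

theorem BackForth.remark_singleton {t t' : Node} (h : BackForth k T T' X X' {(t, t')})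
    (ht : t ∈ T.dom) (hX : t ∈ X.nodes) (ht' : t' ∈ T'.dom) (hX' : t' ∈ X'.nodes) :
    BackForth k T T' (X.remark {t}) (X'.remark {t'}) {(t, t')} := by
  refine MarkedStructure.BackForth.remark h subset_rfl (fun a => ⟨?_, ?_⟩) fun b => ⟨?_, ?_⟩
  · exact fun ha => ⟨⟨t', ht', hX'⟩, congrArg (·, t') ha.2⟩
  · exact fun ⟨_, hb⟩ => ⟨a.2.2, congrArg Prod.fst hb⟩
  · exact fun hb => ⟨⟨t, ht, hX⟩, congrArg (t, ·) hb.2⟩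
  · exact fun ⟨_, ha⟩ => ⟨b.2.2, congrArg Prod.snd ha⟩

/-! ### Horizontal and vertical gluing -/

/-- Every root of the first piece precedes every root of the second one in the sibling order; the
marked points are the roots. -/
def horizontal : MarkedStructure.Gluing TreeRel where
  leftToRight
    | .desc, _, _ => False
    | .sib, a, b => a ∧ b
  rightToLeft _ _ _ := False

/-- The first piece lies below a node, and the marked points of the second piece are the ancestors
of that node. -/
def vertical : MarkedStructure.Gluing TreeRel where
  leftToRight _ _ _ := False
  rightToLeft
    | .desc, a, _ => a
    | .sib, _, _ => False

/-- Every node of the region has a marked node of the region as an ancestor. -/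
def IsRooted (X : Region) : Prop := ∀ x ∈ X.nodes, ∃ s ∈ X.marked, s <+: x

theorem IsRooted.union (hX : X.IsRooted) (hY : Y.IsRooted) : (X ∪ Y).IsRooted := by
  rintro x (hx | hx)
  · exact (hX x hx).imp fun _ hs => ⟨.inl hs.1, hs.2⟩
  · exact (hY x hx).imp fun _ hs => ⟨.inr hs.1, hs.2⟩

theorem IsRooted.glues (hX : X.IsRooted) (hY : Y.IsRooted)
    (hlt : ∀ s ∈ X.marked, ∀ t ∈ Y.marked, SiblingLt s t) : Glues horizontal X Y where
  disjoint := Set.disjoint_left.2 fun z hzX hzY =>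
    have ⟨s, hs, hsz⟩ := hX z hzX
    have ⟨t, ht, htz⟩ := hY z hzY
    (hlt s hs t ht).not_prefix hsz htz
  leftToRight x hx y hy r := by
    obtain ⟨s, hs, hsx⟩ := hX x hx
    obtain ⟨t, ht, hty⟩ := hY y hy
    have hst := hlt s hs t ht
    cases r with
    | desc => exact iff_of_false (fun h => hst.not_prefix (hsx.trans h) hty) id
    | sib =>
      refine ⟨fun h => ?_, fun h => hlt x h.1 y h.2⟩
      have s_eq : s = x := by_contra fun hne => hst.not_prefix (h.prefix_right hsx hne) hty
      have t_eq : t = y := by_contra fun hne => hst.not_prefix hsx (h.prefix_left hty hne)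
      exact ⟨s_eq ▸ hs, t_eq ▸ ht⟩
  rightToLeft x hx y hy r := by
    obtain ⟨s, hs, hsx⟩ := hX x hx
    obtain ⟨t, ht, hty⟩ := hY y hy
    have hst := hlt s hs t ht
    refine iff_of_false (fun h => ?_) id
    cases r with
    | desc => exact hst.not_prefix hsx (hty.trans h)
    | sib =>
      obtain rfl | hne := eq_or_ne t y
      · exact (hst.trans h).not_prefix hsx List.prefix_rfl
      · exact hst.not_prefix hsx (h.prefix_right hty hne)

/-- The proper descendants of `s`, without marks. -/
def below (s : Node) : Region := ⟨{z | s <+: z ∧ s ≠ z}, ∅, Set.empty_subset _⟩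

theorem below_subset {s p : Node} (h : s <+: p) : (below p).nodes ⊆ (below s).nodes :=
  fun _ hz => ⟨h.trans hz.1, fun heq =>
    hz.2 (hz.1.eq_of_length_le (heq ▸ h).length_le)⟩

theorem prefix_of_notMem_below {p x y : Node} (hy : y <+: x) (hp : p <+: x)
    (h : y ∉ (below p).nodes) : y <+: p := by
  obtain hyp | hpy := List.prefix_or_prefix_of_prefix hy hp
  · exact hyp
  · exact of_not_not fun hyp => h ⟨hpy, fun heq => hyp (heq ▸ List.prefix_rfl)⟩

theorem glues_vertical {p : Node} (hX : X.nodes ⊆ (below p).nodes)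
    (hY : Disjoint (below p).nodes Y.nodes) (hmarked : ∀ y ∈ Y.nodes, y ∈ Y.marked ↔ y <+: p) :
    Glues vertical X Y where
  disjoint := hY.mono_left hX
  leftToRight x hx y hy r := by
    obtain ⟨hpx, hne⟩ := hX hx
    have hpy : ¬ (p <+: y ∧ p ≠ y) := Set.disjoint_right.1 hY hy
    refine iff_of_false (fun h => hpy ?_) id
    cases r with
    | desc => exact ⟨hpx.trans h, fun heq => hne (hpx.eq_of_length_le (heq ▸ h).length_le)⟩
    | sib =>
      refine ⟨h.prefix_right hpx hne, ?_⟩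
      rintro rfl
      exact h.not_prefix List.prefix_rfl hpx
  rightToLeft x hx y hy r := by
    obtain ⟨hpx, hne⟩ := hX hx
    have hpy : ¬ (p <+: y ∧ p ≠ y) := Set.disjoint_right.1 hY hy
    cases r with
    | desc =>
      exact Iff.trans ⟨fun h => prefix_of_notMem_below h hpx hpy, fun h => h.trans hpx⟩
        (hmarked y hy).symm
    | sib =>
      refine iff_of_false (fun h => hpy ⟨h.prefix_left hpx hne, ?_⟩) id
      rintro rfl
      exact h.not_prefix hpx List.prefix_rfl

/-! ### Decompositions of trees -/

/-- The marked region consisting of a single node. -/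
def point (t : Node) : Region := ⟨{t}, {t}, subset_rfl⟩

/-- The union of the subtrees with roots in `R`, with the roots marked. -/
def forest (R : Set Node) : Region :=
  ⟨{z | ∃ s ∈ R, s <+: z}, R, fun s hs => ⟨s, hs, List.prefix_rfl⟩⟩

/-- The subtree rooted at `t`, with `t` marked. -/
def tree (t : Node) : Region := forest {t}

/-- The subtrees of the left siblings of `t`. -/
def leftForest (t : Node) : Region := forest {s | SiblingLt s t}

/-- The subtrees of the right siblings of `t`. -/
def rightForest (t : Node) : Region := forest {s | SiblingLt t s}

/-- The subtrees of the children of `s`. -/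
def childForest (s : Node) : Region := forest {t | ∃ i, t = s ++ [i]}

/-- The proper descendants of `s` that are not proper descendants of `t`, with the ancestors of `t`
marked. -/
def between (s t : Node) : Region :=
  ⟨(below s).nodes \ (below t).nodes, ((below s).nodes \ (below t).nodes) ∩ {z | z <+: t},
    Set.inter_subset_left⟩

/-- A node together with the subtrees of its siblings; the node is marked. -/
def context (t : Node) : Region := (leftForest t ∪ (point t ∪ rightForest t)).remark {t}

theorem isRooted_point (t : Node) : (point t).IsRooted := by
  rintro _ rfl
  exact ⟨_, rfl, List.prefix_rfl⟩

theorem isRooted_forest (R : Set Node) : (forest R).IsRooted := fun _ hx => hx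

theorem forest_union (R R' : Set Node) : forest (R ∪ R') = forest R ∪ forest R' := by
  refine Region.ext (Set.ext fun z => ?_) rfl
  simp only [forest, Union.union, Set.union, Set.mem_ofPred_eq, or_and_right, exists_or]

theorem isRooted_tree (t : Node) : (tree t).IsRooted := isRooted_forest _

theorem IsRooted.glues_rightForest {t : Node} (hX : X.IsRooted) (hmarked : X.marked = {t}) :
    Glues horizontal X (rightForest t) :=
  hX.glues (isRooted_forest _) (by
    rw [hmarked]
    rintro _ rfl _ h
    exact h)

theorem IsRooted.glues_leftForest {t : Node} (hX : X.IsRooted) (hmarked : X.marked = {t}) :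
    Glues horizontal (leftForest t) X :=
  (isRooted_forest _).glues hX (by
    rw [hmarked]
    rintro _ h _ rfl
    exact h)

theorem IsRooted.glues_leftForest_union {t : Node} (hX : X.IsRooted) (hmarked : X.marked = {t}) :
    Glues horizontal (leftForest t) (X ∪ rightForest t) :=
  (isRooted_forest _).glues (hX.union (isRooted_forest _)) (by
    intro s hs u hu
    obtain hu | hu := hu
    · rw [hmarked] at hu
      exact hu ▸ hs
    · exact hs.trans hu)

theorem glues_below_point (t : Node) : Glues vertical (below t) (point t) :=
  glues_vertical subset_rfl (Set.disjoint_singleton_right.2 fun h => h.2 rfl) (by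
    rintro _ rfl
    exact iff_of_true rfl List.prefix_rfl)

theorem glues_between {s p : Node} (hX : X.nodes ⊆ (below p).nodes) :
    Glues vertical X (between s p) :=
  glues_vertical hX Set.disjoint_sdiff_right fun _ hy => and_iff_right hy

theorem leftForest_succ (p : Node) (i : ℕ) :
    leftForest (p ++ [i + 1]) = leftForest (p ++ [i]) ∪ tree (p ++ [i]) := by
  rw [leftForest, leftForest, tree, ← forest_union]
  congr 1
  ext s
  simp only [siblingLt_append_left_iff, Set.mem_union, Set.mem_ofPred_eq, Set.mem_singleton_iff,
    Nat.lt_succ_iff_lt_or_eq, or_and_right, exists_or, exists_eq_left]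

theorem rightForest_eq_union (p : Node) (i : ℕ) :
    rightForest (p ++ [i]) = tree (p ++ [i + 1]) ∪ rightForest (p ++ [i + 1]) := by
  rw [rightForest, rightForest, tree, ← forest_union]
  congr 1
  ext s
  simp only [siblingLt_append_right_iff, Set.mem_union, Set.mem_ofPred_eq, Set.mem_singleton_iff,
    gt_iff_lt, Nat.lt_iff_add_one_le (m := i), le_iff_eq_or_lt (a := i + 1), or_and_right,
    exists_or, exists_eq_left']

theorem childForest_eq_union (p : Node) (i : ℕ) : childForest p =
    leftForest (p ++ [i]) ∪ (tree (p ++ [i]) ∪ rightForest (p ++ [i])) := by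
  rw [childForest, leftForest, rightForest, tree, ← forest_union, ← forest_union]
  congr 1
  ext s
  simp only [siblingLt_append_left_iff, siblingLt_append_right_iff, Set.mem_union,
    Set.mem_ofPred_eq, Set.mem_singleton_iff]
  constructor
  · rintro ⟨j, rfl⟩
    obtain h | rfl | h := lt_trichotomy j i
    exacts [.inl ⟨j, h, rfl⟩, .inr (.inl rfl), .inr (.inr ⟨j, h, rfl⟩)]
  · rintro (⟨j, -, rfl⟩ | rfl | ⟨j, -, rfl⟩) <;> exact ⟨_, rfl⟩

theorem childForest_nodes (p : Node) : (childForest p).nodes = (below p).nodes := by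
  ext z
  simp only [childForest, forest, below, Set.mem_ofPred_eq]
  constructor
  · rintro ⟨_, ⟨i, rfl⟩, h⟩
    exact ⟨(List.prefix_append _ _).trans h, by
      rintro rfl
      simpa using h.length_le⟩
  · rintro ⟨⟨_ | ⟨i, w⟩, rfl⟩, hne⟩
    · exact absurd (List.append_nil p).symm hne
    · exact ⟨_, ⟨i, rfl⟩, w, List.append_assoc _ _ _⟩

theorem tree_eq_union (t : Node) : tree t = below t ∪ point t := by
  ext z
  · simp only [tree, forest, below, point, Union.union, Set.union, Set.mem_ofPred_eq,
      Set.mem_singleton_iff, exists_eq_left]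
    constructor
    · exact fun h => (eq_or_ne z t).symm.imp (fun hne => ⟨h, hne.symm⟩) id
    · rintro (⟨h, -⟩ | rfl)
      exacts [h, List.prefix_rfl]
  · exact iff_of_eq (false_or _).symm

theorem below_eq_remark {s p : Node} (h : s <+: p) :
    below s = (childForest p ∪ between s p).remark ∅ := by
  refine Region.ext ?_ (Set.inter_empty _).symm
  change _ = (childForest p).nodes ∪ ((below s).nodes \ (below p).nodes)
  rw [childForest_nodes, Set.union_sdiff_cancel (below_subset h)]

theorem between_eq_union {s p t : Node} (hsp : s <+: p) (hpt : p <+: t) :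
    between s t = between p t ∪ between s p := by
  have hnodes : (below s).nodes \ (below t).nodes =
      ((below p).nodes \ (below t).nodes) ∪ ((below s).nodes \ (below p).nodes) := by
    rw [Set.union_comm, Set.sdiff_union_sdiff_cancel (below_subset hsp) (below_subset hpt)]
  refine Region.ext hnodes ?_
  change _ ∩ _ = _ ∩ _ ∪ _ ∩ _
  rw [hnodes, Set.union_inter_distrib_right]
  congr 1
  ext z
  exact and_congr_right fun hz =>
    ⟨fun h => prefix_of_notMem_below h hpt hz.2, fun h => h.trans hpt⟩

theorem between_concat (p : Node) (i : ℕ) : between p (p ++ [i]) = context (p ++ [i]) := by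
  have hnodes : (below p).nodes \ (below (p ++ [i])).nodes =
      (leftForest (p ++ [i]) ∪ (point (p ++ [i]) ∪ rightForest (p ++ [i]))).nodes := by
    rw [← childForest_nodes, childForest_eq_union p i]
    ext z
    have hleft (h : z ∈ (leftForest (p ++ [i])).nodes) :=
      Set.disjoint_left.1 ((isRooted_tree _).glues_leftForest_union rfl).disjoint h
    have hright (h : z ∈ (tree (p ++ [i])).nodes) :=
      Set.disjoint_left.1 ((isRooted_tree _).glues_rightForest rfl).disjoint h
    have hpoint : z ∈ (point (p ++ [i])).nodes → z ∉ (below (p ++ [i])).nodes :=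
      fun h h' => h'.2 h.symm
    rw [tree_eq_union] at hleft hright ⊢
    simp only [Union.union, Set.union, Set.mem_sdiff, Set.mem_ofPred_eq] at hleft hright ⊢
    tauto
  refine Region.ext hnodes ?_
  change _ ∩ _ = _ ∩ _
  rw [← hnodes]
  ext z
  refine and_congr_right fun hz => List.prefix_concat_iff.trans (or_iff_left fun h => ?_)
  exact hz.1.2 (hz.1.1.eq_of_length_le h.length_le)

end Region

namespace Region

variable {T T' : UTree A} {X X' : Region} {k : ℕ} {t t' : Node}

theorem backForth_point (ht : t ∈ T.dom) (ht' : t' ∈ T'.dom) (hlabel : T.label t = T'.label t') :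
    BackForth k T T' (point t) (point t') {(t, t')} := by
  let e : MarkedStructure.Iso ((point t).restrict T) ((point t').restrict T') :=
    { toFun := fun _ => ⟨t', ht', rfl⟩
      invFun := fun _ => ⟨t, ht, rfl⟩
      left_inv := fun a => Subtype.ext a.2.2.symm
      right_inv := fun b => Subtype.ext b.2.2.symm
      label_eq := fun ⟨_, _, ha⟩ => ha ▸ hlabel.symm
      marked_iff := fun a => iff_of_true rfl a.2.2
      rel_iff := by
        rintro (_ | _) ⟨_, _, rfl⟩ ⟨_, _, rfl⟩
        · exact iff_of_true List.prefix_rfl List.prefix_rfl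
        · exact iff_of_false (fun h => h.not_prefix List.prefix_rfl List.prefix_rfl)
            fun h => h.not_prefix List.prefix_rfl List.prefix_rfl }
  exact (e.backForth k).mono fun a ha => Subtype.ext (congrArg Prod.snd ha).symm

end Region

open Region

/-! ### Types of the parts of a pointed tree -/

section Types

variable (k : ℕ) (x : PointedTree A)

/-- The type of the tree below a node. -/
def belowType : MarkedStructure.KType A k vertical := ((below x.node).restrict x.tree).kType k _

/-- The type of the subtree rooted at a node. -/
def treeType : MarkedStructure.KType A k horizontal := ((tree x.node).restrict x.tree).kType k _

/-- The type of the forest to the left of a node. -/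
def leftType : MarkedStructure.KType A k horizontal :=
  ((leftForest x.node).restrict x.tree).kType k _

/-- The type of the forest to the right of a node. -/
def rightType : MarkedStructure.KType A k horizontal :=
  ((rightForest x.node).restrict x.tree).kType k _

/-- The type of the context of a node among its siblings. -/
def contextType : MarkedStructure.KType A k vertical :=
  ((context x.node).restrict x.tree).kType k _

/-- The type of the part of the tree below `s` and not below the descendant `p` of `s`. -/
def betweenType (s p : PointedTree A) : MarkedStructure.KType A k vertical :=
  ((between s.node p.node).restrict s.tree).kType k _

end Types

variable {k : ℕ} {x y : PointedTree A}

theorem backForth_tree (hlabel : x.tree.label x.node = y.tree.label y.node)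
    (hbelow : belowType k x = belowType k y) :
    Region.BackForth k x.tree y.tree (tree x.node) (tree y.node) {(x.node, y.node)} := by
  rw [tree_eq_union, tree_eq_union]
  exact (kType_eq_iff.1 hbelow).union (glues_below_point _) (glues_below_point _)
    (backForth_point x.mem y.mem hlabel) (by
      rintro a b hab
      obtain ⟨rfl, rfl⟩ := Prod.mk.inj hab
      exact .inr ⟨rfl, rfl, rfl⟩)

theorem backForth_siblings {X Y : Region} (hX : X.IsRooted) (hXmarked : X.marked = {x.node})
    (hY : Y.IsRooted) (hYmarked : Y.marked = {y.node}) (hleft : leftType k x = leftType k y)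
    (hXY : Region.BackForth k x.tree y.tree X Y {(x.node, y.node)})
    (hright : rightType k x = rightType k y) :
    Region.BackForth k x.tree y.tree (leftForest x.node ∪ (X ∪ rightForest x.node))
      (leftForest y.node ∪ (Y ∪ rightForest y.node)) {(x.node, y.node)} := by
  have hxX : x.node ∈ X.nodes := X.marked_subset (hXmarked ▸ rfl)
  have hyY : y.node ∈ Y.nodes := Y.marked_subset (hYmarked ▸ rfl)
  have hXYright : Region.BackForth k x.tree y.tree (X ∪ rightForest x.node)
      (Y ∪ rightForest y.node) {(x.node, y.node)} := by
    refine hXY.union (hX.glues_rightForest hXmarked) (hY.glues_rightForest hYmarked)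
      (kType_eq_iff.1 hright) ?_
    rintro a b hab
    obtain ⟨rfl, rfl⟩ := Prod.mk.inj hab
    exact .inl ⟨hxX, hyY, rfl⟩
  refine (kType_eq_iff.1 hleft).union (hX.glues_leftForest_union hXmarked)
    (hY.glues_leftForest_union hYmarked) hXYright ?_
  rintro a b hab
  obtain ⟨rfl, rfl⟩ := Prod.mk.inj hab
  exact .inr ⟨.inl hxX, .inl hyY, rfl⟩

theorem treeType_eq_of_eq (hlabel : x.tree.label x.node = y.tree.label y.node)
    (hbelow : belowType k x = belowType k y) : treeType k x = treeType k y :=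
  kType_eq_iff.2 ((backForth_tree hlabel hbelow).mono (Set.empty_subset _))

theorem contextType_eq_of_eq (hlabel : x.tree.label x.node = y.tree.label y.node)
    (hleft : leftType k x = leftType k y) (hright : rightType k x = rightType k y) :
    contextType k x = contextType k y := by
  have hsiblings := backForth_siblings (isRooted_point _) rfl (isRooted_point _) rfl hleft
    (backForth_point x.mem y.mem hlabel) hright
  exact kType_eq_iff.2 ((hsiblings.remark_singleton x.mem (.inr (.inl rfl)) y.mem
    (.inr (.inl rfl))).mono (Set.empty_subset _))

/-! ### Definability of the types of contexts -/

theorem IsDeterministicStep.of_rightUnique {st : XStep}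
    (h : ∀ T : UTree A, Relator.RightUnique (st.rel T)) :
    IsDeterministicStep (PointedTree.Step (A := A) st) where
  rightUnique _ _ _ hy hz := PointedTree.ext (hy.1.symm.trans hz.1) (h _ hy.2 hz.2)
  pathDefinable := .step st
  transGen _ := .transGen st

theorem UTree.leftUnique_childR (T : UTree A) : Relator.LeftUnique T.childR := by
  rintro s t _ ⟨-, -, i, rfl⟩ ⟨-, -, j, h⟩
  exact (List.append_inj' h rfl).1

theorem UTree.rightUnique_nsR (T : UTree A) : Relator.RightUnique T.nsR := by
  rintro _ _ _ ⟨-, -, p, i, rfl, rfl⟩ ⟨-, -, q, j, h, rfl⟩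
  obtain ⟨rfl, hij⟩ := List.append_inj' h rfl
  rw [List.singleton_inj.1 hij]

theorem UTree.leftUnique_nsR (T : UTree A) : Relator.LeftUnique T.nsR := by
  rintro _ _ _ ⟨-, -, p, i, rfl, rfl⟩ ⟨-, -, q, j, rfl, h⟩
  obtain ⟨rfl, hij⟩ := List.append_inj' h rfl
  rw [Nat.succ_injective (List.singleton_inj.1 hij)]

theorem isDeterministicStep_chI : IsDeterministicStep (PointedTree.Step (A := A) .chI) :=
  .of_rightUnique fun T => T.leftUnique_childR.flip

theorem isDeterministicStep_ns : IsDeterministicStep (PointedTree.Step (A := A) .ns) :=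
  .of_rightUnique fun T => T.rightUnique_nsR

theorem isDeterministicStep_nsI : IsDeterministicStep (PointedTree.Step (A := A) .nsI) :=
  .of_rightUnique fun T => T.leftUnique_nsR.flip

theorem wellFounded_swap_step_nsI :
    WellFounded (Function.swap (PointedTree.Step (A := A) .nsI)) := by
  refine Subrelation.wf (r := InvImage (· < ·) fun x => x.node.sum) ?_
    (InvImage.wf _ wellFounded_lt)
  rintro x y ⟨-, -, -, p, i, hx, hy⟩
  simp [InvImage, hx, hy]

theorem wellFounded_swap_step_ns :
    WellFounded (Function.swap (PointedTree.Step (A := A) .ns)) := by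
  refine Subrelation.wf (r := InvImage (· < ·) fun x => x.tree.dom.sup List.sum - x.node.sum) ?_
    (InvImage.wf _ wellFounded_lt)
  rintro x y ⟨hT, -, -, p, i, hx, hy⟩
  have hle : x.node.sum ≤ x.tree.dom.sup List.sum := Finset.le_sup x.mem
  simp only [InvImage, hT, hx, hy, List.sum_append, List.sum_singleton] at hle ⊢
  omega

theorem treeType_mul_rightType (h : PointedTree.Step .ns x y) :
    rightType k x = treeType k y * rightType k y := by
  obtain ⟨hT, -, -, p, i, hx, hy⟩ := h
  rw [rightType, treeType, rightType, hT, hx, hy, rightForest_eq_union]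
  exact ((isRooted_tree _).glues_rightForest rfl).kType_eq_mul _

theorem leftType_mul_treeType (h : PointedTree.Step .nsI x y) :
    leftType k x = leftType k y * treeType k y := by
  obtain ⟨hT, -, -, p, i, hy, hx⟩ := h
  rw [leftType, treeType, leftType, hT, hx, hy, leftForest_succ]
  exact ((isRooted_tree _).glues_leftForest rfl).kType_eq_mul _

theorem rightType_eq_one (h : ∀ y, ¬ PointedTree.Step .ns x y) : rightType k x = 1 := by
  suffices IsEmpty ((rightForest x.node).restrict x.tree) from MarkedStructure.kType_eq_one
  refine ⟨fun ⟨z, hz, s, hs, hsz⟩ => ?_⟩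
  obtain ⟨p, i, j, hx, rfl, hij⟩ := hs
  have hnext : p ++ [i + 1] ∈ x.tree.dom := by
    have hj := x.tree.prefix_closed hz hsz
    obtain rfl | hlt := hij.succ_le.eq_or_lt
    exacts [hj, x.tree.sib_closed hj hlt]
  exact h ⟨x.tree, _, hnext⟩ ⟨rfl, x.mem, hnext, p, i, hx, rfl⟩

theorem leftType_eq_one (h : ∀ y, ¬ PointedTree.Step .nsI x y) : leftType k x = 1 := by
  suffices IsEmpty ((leftForest x.node).restrict x.tree) from MarkedStructure.kType_eq_one
  refine ⟨fun ⟨_, _, _, hs, _⟩ => ?_⟩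
  obtain ⟨p, i, _ | j, _, hx, hij⟩ := hs
  · exact absurd hij i.not_lt_zero
  · have hprev : p ++ [j] ∈ x.tree.dom := x.tree.sib_closed (hx ▸ x.mem) j.lt_succ_self
    exact h ⟨x.tree, _, hprev⟩ ⟨rfl, hprev, x.mem, p, j, rfl, hx⟩

section Finite

variable [Finite A]

theorem DefinableMap.treeType (hbelow : DefinableMap (belowType (A := A) k)) :
    DefinableMap (treeType (A := A) k) :=
  (DefinableMap.label.prodMk hbelow).of_forall_eq_of_eq fun _ _ h =>
    treeType_eq_of_eq (congrArg Prod.fst h) (congrArg Prod.snd h)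

theorem DefinableMap.rightType (hbelow : DefinableMap (belowType (A := A) k)) :
    DefinableMap (rightType (A := A) k) :=
  .of_eq_mul (MarkedStructure.KType.exists_pow_succ_eq_pow A k horizontal) isDeterministicStep_ns
    wellFounded_swap_step_ns hbelow.treeType (fun _ _ => treeType_mul_rightType)
    fun _ => rightType_eq_one

-- A path to the left meets the factors of `leftType` in reverse order.
theorem DefinableMap.leftType (hbelow : DefinableMap (belowType (A := A) k)) :
    DefinableMap (leftType (A := A) k) := by
  obtain ⟨r, hr⟩ := MarkedStructure.KType.exists_pow_succ_eq_pow A k horizontal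
  have : Finite (MarkedStructure.KType A k horizontal)ᵐᵒᵖ := .of_equiv _ MulOpposite.opEquiv
  refine .comp (f := MulOpposite.unop) (.of_eq_mul ⟨r, fun t => ?_⟩ isDeterministicStep_nsI
    wellFounded_swap_step_nsI (hbelow.treeType.comp MulOpposite.op)
    (fun _ _ h => congrArg MulOpposite.op (leftType_mul_treeType h))
    fun _ h => congrArg MulOpposite.op (leftType_eq_one h))
  exact MulOpposite.unop_injective (hr t.unop)

theorem DefinableMap.contextType (hbelow : DefinableMap (belowType (A := A) k)) :
    DefinableMap (contextType (A := A) k) :=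
  (DefinableMap.label.prodMk (hbelow.leftType.prodMk hbelow.rightType)).of_forall_eq_of_eq
    fun _ _ h => contextType_eq_of_eq (congrArg Prod.fst h) (congrArg (·.2.1) h)
      (congrArg (·.2.2) h)

end Finite

variable {s : PointedTree A}

/-! ### Definability of the types of subtrees -/

theorem betweenType_self (k : ℕ) (x : PointedTree A) : betweenType k x x = 1 := by
  suffices IsEmpty ((between x.node x.node).restrict x.tree) from MarkedStructure.kType_eq_one
  exact ⟨fun z => z.2.2.2 z.2.2.1⟩

theorem betweenType_eq_mul (hxy : PointedTree.Step .chI x y) (hT : y.tree = s.tree)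
    (h : s.node <+: y.node) :
    betweenType k s x = contextType k x * betweenType k s y := by
  obtain ⟨hxT, -, -, i, hx⟩ := hxy
  rw [betweenType, contextType, betweenType, hxT, hT, hx,
    between_eq_union h (List.prefix_append _ _), ← between_concat]
  exact (glues_between Set.sdiff_subset).kType_eq_mul _

theorem pathProduct_betweenType (hT : x.tree = s.tree) (h : s.node <+: x.node) :
    PathProduct (PointedTree.Step .chI) (contextType k) (betweenType k s x) x s := by
  obtain ⟨w, hw⟩ := h
  induction w using List.reverseRecOn generalizing x with
  | nil =>
    obtain rfl : x = s := PointedTree.ext hT (hw.symm.trans (List.append_nil _))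
    rw [betweenType_self]
    exact .nil x
  | append_singleton w i ih =>
    rw [← List.append_assoc] at hw
    have hparent : s.node ++ w ∈ x.tree.dom :=
      x.tree.prefix_closed x.mem (hw ▸ List.prefix_append _ _)
    let y : PointedTree A := ⟨x.tree, s.node ++ w, hparent⟩
    have hxy : PointedTree.Step .chI x y := ⟨rfl, hparent, x.mem, i, hw.symm⟩
    rw [betweenType_eq_mul hxy hT (List.prefix_append _ _)]
    exact .cons hxy (ih hT rfl)

theorem pathProduct_contextType_iff {m : MarkedStructure.KType A k vertical} :
    PathProduct (PointedTree.Step .chI) (contextType k) m x s ↔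
      x.tree = s.tree ∧ s.node <+: x.node ∧ betweenType k s x = m := by
  constructor
  · intro h
    induction h with
    | nil => exact ⟨rfl, List.prefix_rfl, betweenType_self k _⟩
    | cons hxy _ ih =>
      obtain ⟨hT, hprefix, rfl⟩ := ih
      have hchild := hxy
      obtain ⟨hxT, -, -, i, hx⟩ := hchild
      exact ⟨hxT.trans hT, hx ▸ hprefix.trans (List.prefix_append _ _),
        betweenType_eq_mul hxy hT hprefix⟩
  · rintro ⟨hT, hprefix, rfl⟩
    exact pathProduct_betweenType hT hprefix

/-- The label of a node together with the types of the forests around it. -/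
def nodeData (k : ℕ) (x : PointedTree A) : A × MarkedStructure.KType A k horizontal ×
    MarkedStructure.KType A k horizontal × MarkedStructure.KType A k vertical :=
  (x.tree.label x.node, leftType k x, rightType k x, belowType k x)

/-- A description of the tree below a node `s` from the point of view of a proper descendant `x` of
`s`: the type of the part that is not below the parent of `x`, and the data of `x`. -/
abbrev Shape (A : Type) (k : ℕ) : Type 1 :=
  MarkedStructure.KType A k vertical × A × MarkedStructure.KType A k horizontal ×
    MarkedStructure.KType A k horizontal × MarkedStructure.KType A k vertical

/-- The node `x` is a proper descendant of `s` with shape `σ`. -/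
def HasShape (σ : Shape A k) (s x : PointedTree A) : Prop :=
  nodeData k x = σ.2 ∧ ∃ p, PointedTree.Step .chI x p ∧ p.tree = s.tree ∧ s.node <+: p.node ∧
    betweenType k s p = σ.1

theorem HasShape.tree_eq {σ : Shape A k} (h : HasShape σ s x) : x.tree = s.tree :=
  have ⟨_, _, hxp, hps, _⟩ := h
  hxp.1.trans hps

theorem HasShape.mem_below {σ : Shape A k} (h : HasShape σ s x) :
    x.node ∈ (below s.node).nodes := by
  obtain ⟨-, p, ⟨-, -, -, i, hx⟩, -, hsp, -⟩ := h
  refine ⟨hx ▸ hsp.trans (List.prefix_append _ _), fun heq => ?_⟩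
  have := hsp.length_le
  simp [heq, hx] at this

theorem exists_hasShape (k : ℕ) {a : Node} (ha : a ∈ s.tree.dom) (h : a ∈ (below s.node).nodes) :
    ∃ σ : Shape A k, HasShape σ s ⟨s.tree, a, ha⟩ := by
  obtain ⟨⟨w, rfl⟩, hne⟩ := h
  obtain rfl | ⟨w, i, rfl⟩ := w.eq_nil_or_concat'
  · exact absurd (List.append_nil _).symm hne
  · have hparent : s.node ++ w ∈ s.tree.dom :=
      s.tree.prefix_closed ha ⟨[i], List.append_assoc _ _ _⟩
    exact ⟨(betweenType k s ⟨s.tree, _, hparent⟩, nodeData k ⟨s.tree, _, ha⟩), rfl,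
      ⟨s.tree, _, hparent⟩, ⟨rfl, hparent, ha, i, (List.append_assoc _ _ _).symm⟩, rfl,
      List.prefix_append _ _, rfl⟩

theorem HasShape.backForth_below {σ : Shape A k} {t : PointedTree A} (h : HasShape σ s x)
    (h' : HasShape σ t y) :
    Region.BackForth k s.tree t.tree (below s.node) (below t.node) {(x.node, y.node)} := by
  have hxT := h.tree_eq
  have hyT := h'.tree_eq
  obtain ⟨hdata, p, ⟨-, -, -, i, hx⟩, -, hsp, hbetween⟩ := h
  obtain ⟨hdata', q, ⟨-, -, -, j, hy⟩, -, htq, hbetween'⟩ := h'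
  have heq : nodeData k x = nodeData k y := hdata.trans hdata'.symm
  obtain ⟨hlabel, hleft, hright, hbelow⟩ := by simpa only [nodeData, Prod.mk.injEq] using heq
  have hchildren : Region.BackForth k s.tree t.tree (childForest p.node) (childForest q.node)
      {(x.node, y.node)} := by
    rw [childForest_eq_union p.node i, childForest_eq_union q.node j, ← hx, ← hy, ← hxT, ← hyT]
    exact backForth_siblings (isRooted_tree _) rfl (isRooted_tree _) rfl hleft
      (backForth_tree hlabel hbelow) hright
  rw [below_eq_remark hsp, below_eq_remark htq]
  refine (hchildren.union (glues_between (childForest_nodes _).subset)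
    (glues_between (childForest_nodes _).subset)
    (kType_eq_iff.1 (hbetween.trans hbetween'.symm)) ?_).remark_empty
  rintro a b hab
  obtain ⟨rfl, rfl⟩ := Prod.mk.inj hab
  rw [childForest_nodes, childForest_nodes, hx, hy]
  exact .inl ⟨⟨List.prefix_append _ _, by simp⟩, ⟨List.prefix_append _ _, by simp⟩, rfl⟩

theorem HasShape.backForth_tree {σ : Shape A k} {t : PointedTree A} (h : HasShape σ s x)
    (h' : HasShape σ t y) (hlabel : s.tree.label s.node = t.tree.label t.node) :
    Region.BackForth k s.tree t.tree (tree s.node) (tree t.node) {(x.node, y.node)} := by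
  rw [tree_eq_union, tree_eq_union]
  refine (h.backForth_below h').union (glues_below_point _) (glues_below_point _)
    (backForth_point s.mem t.mem hlabel) ?_
  rintro a b hab
  obtain ⟨rfl, rfl⟩ := Prod.mk.inj hab
  exact .inl ⟨h.mem_below, h'.mem_below, rfl⟩

theorem belowType_succ_eq (hbelow : belowType k x = belowType k y)
    (hshape : {σ : Shape A k | ∃ t, HasShape σ x t} = {σ | ∃ t, HasShape σ y t}) :
    belowType (k + 1) x = belowType (k + 1) y := by
  refine kType_eq_iff.2 (backForth_succ_iff.2 ⟨kType_eq_iff.1 hbelow, fun a ha hax => ?_,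
    fun b hb hby => ?_⟩)
  · obtain ⟨σ, hσ⟩ := exists_hasShape k ha hax
    obtain ⟨t, ht⟩ : ∃ t, HasShape σ y t := hshape.subset ⟨_, hσ⟩
    refine ⟨t.node, ht.tree_eq ▸ t.mem, ht.mem_below, ?_⟩
    rw [insert_empty_eq]
    exact hσ.backForth_below ht
  · obtain ⟨σ, hσ⟩ := exists_hasShape k hb hby
    obtain ⟨t, ht⟩ : ∃ t, HasShape σ x t := hshape.superset ⟨_, hσ⟩
    refine ⟨t.node, ht.tree_eq ▸ t.mem, ht.mem_below, ?_⟩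
    rw [insert_empty_eq]
    exact ht.backForth_below hσ

theorem belowType_zero_eq (x y : PointedTree A) : belowType 0 x = belowType 0 y :=
  kType_eq_iff.2 (by constructor <;> simp)

section Finite

variable [Finite A]

theorem DefinableMap.nodeData (hbelow : DefinableMap (belowType (A := A) k)) :
    DefinableMap (nodeData (A := A) k) :=
  DefinableMap.label.prodMk (hbelow.leftType.prodMk (hbelow.rightType.prodMk hbelow))

theorem pathDefinable_hasShape (hbelow : DefinableMap (belowType (A := A) k)) (σ : Shape A k) :
    PathDefinable (HasShape σ) := by
  have hcontext := isDeterministicStep_chI.pathProduct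
    (MarkedStructure.KType.exists_pow_succ_eq_pow A k vertical) hbelow.contextType σ.1
  refine (((PathDefinable.step .chI).comp hcontext).restrict (hbelow.nodeData σ.2)
    (.const True)).swap.congr fun s x => ?_
  simp only [Comp, pathProduct_contextType_iff, and_true]
  rfl

theorem definableMap_belowType (k : ℕ) : DefinableMap (belowType (A := A) k) := by
  induction k with
  | zero => exact DefinableMap.label.of_forall_eq_of_eq fun x y _ => belowType_zero_eq x y
  | succ k ih =>
    exact (ih.prodMk (.set fun σ => (pathDefinable_hasShape ih σ).nodeDefinable_exists)
      ).of_forall_eq_of_eq fun x y h => belowType_succ_eq (congrArg Prod.fst h)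
        (congrArg Prod.snd h)

end Finite

/-! ### From first-order logic to Conditional XPath -/

/-- The quantifier rank of a formula. -/
def FO.rank : FO A → ℕ
  | .eq _ _ | .desc _ _ | .sib _ _ | .lab _ _ => 0
  | .not φ => φ.rank
  | .and φ ψ => max φ.rank ψ.rank
  | .ex _ φ => φ.rank + 1

theorem UTree.sibR_iff {T : UTree A} {s t : Node} (hs : s ∈ T.dom) (ht : t ∈ T.dom) :
    T.sibR s t ↔ SiblingLt s t ∨ s = t ∧ s ≠ [] := by
  rw [UTree.sibR, and_iff_right hs, and_iff_right ht]
  constructor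
  · rintro ⟨p, i, j, rfl, rfl, hij⟩
    obtain hij | rfl := hij.lt_or_eq
    · exact .inl ⟨p, i, j, rfl, rfl, hij⟩
    · exact .inr ⟨rfl, by simp⟩
  · rintro (⟨p, i, j, rfl, rfl, hij⟩ | ⟨rfl, hne⟩)
    · exact ⟨p, i, j, rfl, rfl, hij.le⟩
    · exact ⟨s.dropLast, _, _, (List.dropLast_append_getLast hne).symm,
        (List.dropLast_append_getLast hne).symm, le_rfl⟩

theorem Region.mem_tree_nil (z : Node) : z ∈ (tree []).nodes := ⟨[], rfl, z.nil_prefix⟩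

-- The root is marked in `tree []`; this is how the game sees that the sibling order is reflexive
-- exactly at the other nodes.
theorem Region.BackForth.atom_iff {T T' : UTree A} {k : ℕ} {q : SetRel Node Node}
    {v v' : ℕ → Node} {m n : ℕ} (h : Region.BackForth k T T' (tree []) (tree []) q)
    (hv : ∀ n, v n ∈ T.dom) (hv' : ∀ n, v' n ∈ T'.dom) (hq : ∀ n, (v n, v' n) ∈ q) :
    (v m = v n ↔ v' m = v' n) ∧ (T.descR (v m) (v n) ↔ T'.descR (v' m) (v' n)) ∧
      (T.sibR (v m) (v n) ↔ T'.sibR (v' m) (v' n)) ∧ T.label (v n) = T'.label (v' n) := by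
  let a (n : ℕ) : (tree []).restrict T := ⟨v n, hv n, mem_tree_nil _⟩
  let b (n : ℕ) : (tree []).restrict T' := ⟨v' n, hv' n, mem_tree_nil _⟩
  have hab (n : ℕ) : (a n, b n) ∈ {c : _ × _ | (c.1.1, c.2.1) ∈ q} := hq n
  have hiso := h.isPartialIso
  have heq : v m = v n ↔ v' m = v' n :=
    Subtype.ext_iff.symm.trans ((hiso.eq_iff (hab m) (hab n)).trans Subtype.ext_iff)
  have hmarked : v m = [] ↔ v' m = [] := hiso.marked_iff (hab m)
  refine ⟨heq, ?_, ?_, hiso.label_eq (hab n)⟩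
  · rw [UTree.descR, UTree.descR, and_iff_right (hv m), and_iff_right (hv n),
      and_iff_right (hv' m), and_iff_right (hv' n)]
    exact hiso.rel_iff (hab m) (hab n) .desc
  · rw [UTree.sibR_iff (hv m) (hv n), UTree.sibR_iff (hv' m) (hv' n)]
    exact or_congr (hiso.rel_iff (hab m) (hab n) .sib) (and_congr heq hmarked.not)

theorem Region.BackForth.sat_iff {T T' : UTree A} {φ : FO A} {k : ℕ} {q : SetRel Node Node}
    {v v' : ℕ → Node} (hk : φ.rank ≤ k) (h : Region.BackForth k T T' (tree []) (tree []) q)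
    (hv : ∀ n, v n ∈ T.dom) (hv' : ∀ n, v' n ∈ T'.dom) (hq : ∀ n, (v n, v' n) ∈ q) :
    FO.Sat T v φ ↔ FO.Sat T' v' φ := by
  induction φ generalizing k q v v' with
  | eq m n => exact (h.atom_iff hv hv' hq).1
  | desc m n => exact (h.atom_iff hv hv' hq).2.1
  | sib m n => exact (h.atom_iff hv hv' hq).2.2.1
  | lab a n =>
    simp only [FO.Sat, hv n, hv' n, (h.atom_iff (m := n) (n := n) hv hv' hq).2.2.2]
  | not φ ih => exact not_congr (ih hk h hv hv' hq)
  | and φ ψ ihφ ihψ =>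
    exact and_congr (ihφ ((le_max_left _ _).trans hk) h hv hv' hq)
      (ihψ ((le_max_right _ _).trans hk) h hv hv' hq)
  | ex n φ ih =>
    obtain ⟨k, rfl⟩ := Nat.exists_eq_add_of_le' (Nat.le_of_add_left_le hk)
    have hupdate {a b : Node} (ha : a ∈ T.dom) (hb : b ∈ T'.dom)
        (hab : Region.BackForth k T T' (tree []) (tree []) (insert (a, b) q)) :
        FO.Sat T (Function.update v n a) φ ↔ FO.Sat T' (Function.update v' n b) φ := by
      have hmem (m : ℕ) : Function.update v n a m ∈ T.dom := by
        rw [Function.update_apply]; split_ifs; exacts [ha, hv m]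
      have hmem' (m : ℕ) : Function.update v' n b m ∈ T'.dom := by
        rw [Function.update_apply]; split_ifs; exacts [hb, hv' m]
      refine ih (Nat.le_of_succ_le_succ hk) hab hmem hmem' fun m => ?_
      rw [Function.update_apply, Function.update_apply]
      split_ifs
      exacts [Or.inl rfl, Or.inr (hq m)]
    obtain ⟨-, hforth, hback⟩ := backForth_succ_iff.1 h
    constructor
    · rintro ⟨a, ha, hsat⟩
      obtain ⟨b, hb, -, hab⟩ := hforth a ha (mem_tree_nil a)
      exact ⟨b, hb, (hupdate ha hb hab).1 hsat⟩
    · rintro ⟨b, hb, hsat⟩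
      obtain ⟨a, ha, -, hab⟩ := hback b hb (mem_tree_nil b)
      exact ⟨a, ha, (hupdate ha hb hab).2 hsat⟩

theorem nodeDefinable_isRoot : NodeDefinable (fun x : PointedTree A => x.node = []) := by
  refine (PathDefinable.step .chI).nodeDefinable_exists.not.congr fun x => ⟨?_, fun h => ?_⟩
  · rintro hx ⟨y, -, -, -, i, hi⟩
    simp [hx] at hi
  · by_contra hne
    have hparent : x.node.dropLast ∈ x.tree.dom :=
      x.tree.prefix_closed x.mem (List.dropLast_prefix _)
    exact h ⟨⟨x.tree, _, hparent⟩, rfl, hparent, x.mem, _,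
      (List.dropLast_append_getLast hne).symm⟩

/-- The shapes of `x` as a descendant of the root, paired with the label of the root; the set is
empty if `x` is the root, and has one element otherwise. -/
def rootShapes (k : ℕ) (x : PointedTree A) : Set (A × Shape A k) :=
  {σ | ∃ r, HasShape σ.2 r x ∧ r.node = [] ∧ r.tree.label r.node = σ.1}

theorem rootShapes_nonempty_iff : (rootShapes k x).Nonempty ↔ x.node ≠ [] := by
  constructor
  · rintro ⟨σ, r, hσ, hr, -⟩ hx
    exact hσ.mem_below.2 (hr.trans hx.symm)
  · intro hx
    obtain ⟨σ, hσ⟩ := exists_hasShape (s := ⟨x.tree, [], x.tree.nil_mem⟩) k x.mem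
      ⟨x.node.nil_prefix, hx.symm⟩
    exact ⟨(_, σ), _, hσ, rfl, rfl⟩

theorem backForth_tree_nil (hlabel : x.tree.label x.node = y.tree.label y.node)
    (hbelow : belowType k x = belowType k y) (hroot : rootShapes k x = rootShapes k y) :
    Region.BackForth k x.tree y.tree (tree []) (tree []) {(x.node, y.node)} := by
  obtain hempty | ⟨σ, hx⟩ := (rootShapes k x).eq_empty_or_nonempty
  · have hx : x.node = [] := by
      rwa [← Set.not_nonempty_iff_eq_empty, rootShapes_nonempty_iff, not_not] at hempty
    have hy : y.node = [] := by
      rwa [hroot, ← Set.not_nonempty_iff_eq_empty, rootShapes_nonempty_iff, not_not] at hempty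
    simpa only [hx, hy] using backForth_tree hlabel hbelow
  · obtain ⟨s, hs, hsroot, hslabel⟩ := hx
    obtain ⟨t, ht, htroot, htlabel⟩ : σ ∈ rootShapes k y := hroot ▸ ⟨s, hs, hsroot, hslabel⟩
    simpa only [hs.tree_eq, ht.tree_eq, hsroot, htroot] using
      hs.backForth_tree ht (hslabel.trans htlabel.symm)

theorem nodeDefinable_sat [Finite A] (φ : FO A) :
    NodeDefinable (fun x : PointedTree A => FO.Sat x.tree (fun _ => x.node) φ) := by
  have hbelow := definableMap_belowType (A := A) φ.rank
  have hroot : DefinableMap (rootShapes (A := A) φ.rank) := .set fun σ =>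
    ((pathDefinable_hasShape hbelow σ.2).swap.restrict (.const True)
      (nodeDefinable_isRoot.and (DefinableMap.label σ.1))).nodeDefinable_exists.congr
        fun x => by simp
  have hsat : DefinableMap (fun x : PointedTree A => FO.Sat x.tree (fun _ => x.node) φ) :=
    (DefinableMap.label.prodMk (hbelow.prodMk hroot)).of_forall_eq_of_eq fun x y h =>
      propext ((backForth_tree_nil (congrArg Prod.fst h) (congrArg (·.2.1) h)
        (congrArg (·.2.2) h)).sat_iff le_rfl (fun _ => x.mem) (fun _ => y.mem) fun _ => rfl)
  exact (hsat True).congr fun x => by rw [eq_iff_iff, iff_true]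

/-! ### Definability in first-order logic -/

section LeftUnique

variable {α : Type*} {r : α → α → Prop}

theorem reflTransGen_right_of_leftUnique (hr : Relator.LeftUnique r) {x y z : α} (hxy : r x y)
    (h : ReflTransGen r z y) : z = y ∨ ReflTransGen r z x :=
  (ReflTransGen.cases_tail h).imp Eq.symm fun ⟨_, hzw, hwy⟩ => hr hwy hxy ▸ hzw

theorem rel_iff_transGen_of_leftUnique (hr : Relator.LeftUnique r)
    (hirrefl : ∀ x, ¬ TransGen r x x) {x y : α} :
    r x y ↔ TransGen r x y ∧ ¬ ∃ z, TransGen r x z ∧ TransGen r z y := by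
  constructor
  · rintro hxy
    refine ⟨.single hxy, fun ⟨z, hxz, hzy⟩ => ?_⟩
    obtain ⟨w, hzw, hwy⟩ := TransGen.tail'_iff.1 hzy
    exact hirrefl x (hxz.trans_left (hr hwy hxy ▸ hzw))
  · rintro ⟨hxy, hbetween⟩
    obtain ⟨w, hxw, hwy⟩ := TransGen.tail'_iff.1 hxy
    obtain rfl | hxw := reflTransGen_iff_eq_or_transGen.1 hxw
    · exact hwy
    · exact absurd ⟨w, hxw, .single hwy⟩ hbetween

-- As predecessors are unique, a path from `x` to `y` visits all points between `x` and `y`.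
theorem transGen_and_iff_of_leftUnique (hr : Relator.LeftUnique r)
    (hirrefl : ∀ x, ¬ TransGen r x x) {P : α → Prop} {x y : α} :
    TransGen (fun a b => r a b ∧ P b) x y ↔
      TransGen r x y ∧ ∀ z, TransGen r x z → ReflTransGen r z y → P z := by
  constructor
  · refine fun h => ⟨TransGen.mono (fun _ _ h => h.1) _ _ h, ?_⟩
    induction h with
    | single hxy =>
      intro z hxz hzy
      obtain rfl | hzx := reflTransGen_right_of_leftUnique hr hxy.1 hzy
      · exact hxy.2
      · exact absurd (hxz.trans_left hzx) (hirrefl x)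
    | tail _ hwy ih =>
      intro z hxz hzy
      obtain rfl | hzw := reflTransGen_right_of_leftUnique hr hwy.1 hzy
      · exact hwy.2
      · exact ih z hxz hzw
  · rintro ⟨h, hP⟩
    induction h with
    | single hxy => exact .single ⟨hxy, hP _ (.single hxy) .refl⟩
    | tail hxw hwy ih =>
      exact (ih fun z hxz hzw => hP z hxz (hzw.tail hwy)).tail ⟨hwy, hP _ (hxw.tail hwy) .refl⟩

end LeftUnique

theorem UTree.transGen_childR_iff {T : UTree A} {s t : Node} :
    TransGen T.childR s t ↔ T.descR s t ∧ s ≠ t := by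
  constructor
  · intro h
    suffices h : T.descR s t ∧ s.length < t.length from
      ⟨h.1, fun hst => h.2.ne (congrArg List.length hst)⟩
    induction h with
    | single h =>
      obtain ⟨hs, ht, i, rfl⟩ := h
      exact ⟨⟨hs, ht, List.prefix_append _ _⟩, by simp⟩
    | tail _ h ih =>
      obtain ⟨-, ht, i, rfl⟩ := h
      exact ⟨⟨ih.1.1, ht, ih.1.2.2.trans (List.prefix_append _ _)⟩, ih.2.trans (by simp)⟩
  · rintro ⟨⟨-, ht, w, rfl⟩, hne⟩
    induction w using List.reverseRecOn with
    | nil => exact absurd (List.append_nil s).symm hne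
    | append_singleton w i ih =>
      rw [← List.append_assoc] at ht ⊢
      have hw : s ++ w ∈ T.dom := T.prefix_closed ht (List.prefix_append _ _)
      have hstep : T.childR (s ++ w) (s ++ w ++ [i]) := ⟨hw, ht, i, rfl⟩
      obtain rfl | hwne := eq_or_ne w []
      · simpa only [List.append_nil] using TransGen.single hstep
      · exact (ih (by simpa using hwne) hw).tail hstep

theorem UTree.transGen_nsR_iff {T : UTree A} {s t : Node} :
    TransGen T.nsR s t ↔ T.sibR s t ∧ s ≠ t := by
  constructor
  · intro h
    induction h with
    | single h =>
      obtain ⟨hs, ht, p, i, rfl, rfl⟩ := h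
      exact ⟨⟨hs, ht, p, i, i + 1, rfl, rfl, i.le_succ⟩, by simp⟩
    | tail _ h ih =>
      obtain ⟨-, ht, q, j, rfl, rfl⟩ := h
      obtain ⟨⟨hs, -, p, i, j', rfl, h, hij⟩, -⟩ := ih
      obtain ⟨rfl, hj⟩ := List.append_inj' h rfl
      obtain rfl := List.singleton_inj.1 hj
      exact ⟨⟨hs, ht, _, i, j + 1, rfl, rfl, by lia⟩, by simp; lia⟩
  · rintro ⟨⟨hs, ht, p, i, j, rfl, rfl, hij⟩, hne⟩
    have hlt : i < j := hij.lt_of_ne fun h => hne (h ▸ rfl)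
    clear hij hne
    induction j, hlt using Nat.le_induction with
    | base => exact .single ⟨hs, ht, p, i, rfl, rfl⟩
    | succ j _ ih =>
      have hj : p ++ [j] ∈ T.dom := T.sib_closed ht j.lt_succ_self
      exact (ih hj).tail ⟨hj, ht, p, j, rfl, rfl⟩

namespace FO

/-- The unary query `P` is first-order definable. A definition is required for every choice of the
free variable, which allows for substitution of variables. -/
def UnaryDefinable (P : UTree A → Node → Prop) : Prop :=
  ∀ m : ℕ, ∃ φ : FO A, ∀ T v, v m ∈ T.dom → (φ.Sat T v ↔ P T (v m))

/-- The binary query `R` is first-order definable. A definition is required for every choice of the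
two free variables, which may coincide. -/
def BinaryDefinable (R : UTree A → Node → Node → Prop) : Prop :=
  ∀ m n : ℕ, ∃ φ : FO A, ∀ T v, v m ∈ T.dom → v n ∈ T.dom → (φ.Sat T v ↔ R T (v m) (v n))

variable {P P' : UTree A → Node → Prop} {R R' : UTree A → Node → Node → Prop}

namespace UnaryDefinable

theorem not (h : UnaryDefinable P) : UnaryDefinable (fun T s => ¬ P T s) := fun m =>
  let ⟨φ, hφ⟩ := h m
  ⟨.not φ, fun T v hm => not_congr (hφ T v hm)⟩

theorem congr (h : UnaryDefinable P) (hP : ∀ T, ∀ s ∈ T.dom, P' T s ↔ P T s) :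
    UnaryDefinable P' := fun m =>
  (h m).imp fun _ hφ T v hm => (hφ T v hm).trans (hP T _ hm).symm

theorem or (h : UnaryDefinable P) (h' : UnaryDefinable P') :
    UnaryDefinable (fun T s => P T s ∨ P' T s) := fun m =>
  let ⟨φ, hφ⟩ := h m
  let ⟨ψ, hψ⟩ := h' m
  ⟨.not (.and (.not φ) (.not ψ)), fun T v hm => by
    simp only [Sat, hφ T v hm, hψ T v hm, or_iff_not_and_not]⟩

theorem fst (h : UnaryDefinable P) : BinaryDefinable (fun T s _ => P T s) := fun m _ =>
  (h m).imp fun _ hφ T v hm _ => hφ T v hm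

end UnaryDefinable

namespace BinaryDefinable

theorem congr (h : BinaryDefinable R) (hR : ∀ T, ∀ s ∈ T.dom, ∀ t ∈ T.dom, R' T s t ↔ R T s t) :
    BinaryDefinable R' := fun m n =>
  (h m n).imp fun _ hφ T v hm hn => (hφ T v hm hn).trans (hR T _ hm _ hn).symm

theorem swap (h : BinaryDefinable R) : BinaryDefinable (fun T s t => R T t s) := fun m n =>
  (h n m).imp fun _ hφ T v hm hn => hφ T v hn hm

theorem eq : BinaryDefinable (fun (_ : UTree A) s t => s = t) := fun m n =>
  ⟨.eq m n, fun _ _ _ _ => Iff.rfl⟩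

theorem descR : BinaryDefinable (UTree.descR (A := A)) := fun m n =>
  ⟨.desc m n, fun _ _ _ _ => Iff.rfl⟩

theorem sibR : BinaryDefinable (UTree.sibR (A := A)) := fun m n =>
  ⟨.sib m n, fun _ _ _ _ => Iff.rfl⟩

theorem not (h : BinaryDefinable R) : BinaryDefinable (fun T s t => ¬ R T s t) := fun m n =>
  let ⟨φ, hφ⟩ := h m n
  ⟨.not φ, fun T v hm hn => not_congr (hφ T v hm hn)⟩

theorem and (h : BinaryDefinable R) (h' : BinaryDefinable R') :
    BinaryDefinable (fun T s t => R T s t ∧ R' T s t) := fun m n =>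
  let ⟨φ, hφ⟩ := h m n
  let ⟨ψ, hψ⟩ := h' m n
  ⟨.and φ ψ, fun T v hm hn => and_congr (hφ T v hm hn) (hψ T v hm hn)⟩

theorem or (h : BinaryDefinable R) (h' : BinaryDefinable R') :
    BinaryDefinable (fun T s t => R T s t ∨ R' T s t) :=
  (h.not.and h'.not).not.congr fun _ _ _ _ _ => or_iff_not_and_not

theorem comp (h : BinaryDefinable R) (h' : BinaryDefinable R') :
    BinaryDefinable (fun T s t => ∃ u ∈ T.dom, R T s u ∧ R' T u t) := fun m n => by
  obtain ⟨k, hk⟩ := Infinite.exists_notMem_finset {m, n}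
  obtain ⟨hm, hn⟩ : k ≠ m ∧ k ≠ n := by simpa using hk
  obtain ⟨φ, hφ⟩ := h m k
  obtain ⟨ψ, hψ⟩ := h' k n
  refine ⟨.ex k (.and φ ψ), fun T v hvm hvn =>
    exists_congr fun u => and_congr_right fun hu => ?_⟩
  have hφu := hφ T (Function.update v k u)
  have hψu := hψ T (Function.update v k u)
  rw [Function.update_of_ne hm.symm, Function.update_self] at hφu
  rw [Function.update_of_ne hn.symm, Function.update_self] at hψu
  exact and_congr (hφu hvm hu) (hψu hu hvn)

theorem unaryDefinable_exists (h : BinaryDefinable R) :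
    UnaryDefinable (fun T s => ∃ t ∈ T.dom, R T s t) := fun m =>
  ((h.comp h.swap) m m).imp fun φ hφ T v hm => by simpa only [and_self] using hφ T v hm hm

end BinaryDefinable

/-- A family of relations, one on each tree, whose transitive closure is a first-order definable
strict order in which predecessors form chains, and which is thereby definable itself, together with
its conditional transitive closures. -/
structure IsCodeterministicStep (r : UTree A → Node → Node → Prop) : Prop where
  leftUnique : ∀ T, Relator.LeftUnique (r T)
  irrefl : ∀ T s, ¬ TransGen (r T) s s
  mem_right : ∀ {T s t}, r T s t → t ∈ T.dom
  transGen : BinaryDefinable fun T => TransGen (r T)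

namespace IsCodeterministicStep

variable {r : UTree A → Node → Node → Prop}

theorem mem_of_transGen (hr : IsCodeterministicStep r) {T : UTree A} {s t : Node}
    (h : TransGen (r T) s t) : t ∈ T.dom :=
  let ⟨_, _, h⟩ := TransGen.tail'_iff.1 h
  hr.mem_right h

theorem binaryDefinable (hr : IsCodeterministicStep r) : BinaryDefinable r :=
  (hr.transGen.and (hr.transGen.comp hr.transGen).not).congr fun T s _ t _ => by
    rw [rel_iff_transGen_of_leftUnique (hr.leftUnique T) (hr.irrefl T)]
    refine and_congr_right fun _ => not_congr (exists_congr fun u => ?_)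
    exact (and_iff_right_of_imp fun h => hr.mem_of_transGen h.1).symm

theorem reflTransGen (hr : IsCodeterministicStep r) :
    BinaryDefinable fun T => ReflTransGen (r T) :=
  (BinaryDefinable.eq.or hr.transGen).congr fun T s _ t _ => by
    rw [reflTransGen_iff_eq_or_transGen, eq_comm]

theorem transGen_and (hr : IsCodeterministicStep r) (hP : UnaryDefinable P) :
    BinaryDefinable fun T => TransGen fun s t => r T s t ∧ P T t :=
  (hr.transGen.and ((hr.transGen.and hP.fst.swap.not).comp hr.reflTransGen).not).congr
    fun T s _ t _ => by
      rw [transGen_and_iff_of_leftUnique (hr.leftUnique T) (hr.irrefl T)]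
      refine and_congr_right fun _ => ?_
      push Not
      exact ⟨fun h z _ hz hzt => hz.2 (h z hz.1 hzt), fun h z hsz hzt => by_contra fun hz =>
        h z (hr.mem_of_transGen hsz) ⟨hsz, hz⟩ hzt⟩

theorem transGen_swap_and (hr : IsCodeterministicStep r) (hP : UnaryDefinable P) :
    BinaryDefinable fun T => TransGen fun s t => r T t s ∧ P T t :=
  (hP.fst.and ((BinaryDefinable.eq.or (hr.transGen_and hP)).comp hr.binaryDefinable)).swap.congr
    fun T s _ t ht => by
      have hflip := transGen_guard_left_iff (R := r T) (P := P T) (x := t) (z := s)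
      simp only [and_comm (a := P T _)] at hflip
      rw [← transGen_swap]
      refine hflip.trans ((and_comm).trans (and_congr_right fun _ => exists_congr fun u => ?_))
      rw [reflTransGen_iff_eq_or_transGen, eq_comm (a := u)]
      refine (and_iff_right_of_imp ?_).symm
      rintro ⟨rfl | htu, -⟩
      · exact ht
      · exact hr.mem_of_transGen (TransGen.mono (fun _ _ h => h.1) _ _ htu)

end IsCodeterministicStep

theorem isCodeterministicStep_childR : IsCodeterministicStep (UTree.childR (A := A)) where
  leftUnique := UTree.leftUnique_childR
  irrefl _ _ h := (UTree.transGen_childR_iff.1 h).2 rfl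
  mem_right h := h.2.1
  transGen :=
    (BinaryDefinable.descR.and (.not .eq)).congr fun _ _ _ _ _ => UTree.transGen_childR_iff

theorem isCodeterministicStep_nsR : IsCodeterministicStep (UTree.nsR (A := A)) where
  leftUnique := UTree.leftUnique_nsR
  irrefl _ _ h := (UTree.transGen_nsR_iff.1 h).2 rfl
  mem_right h := h.2.1
  transGen :=
    (BinaryDefinable.sibR.and (.not .eq)).congr fun _ _ _ _ _ => UTree.transGen_nsR_iff

theorem binaryDefinable_rel (st : XStep) : BinaryDefinable (fun T : UTree A => st.rel T) := by
  cases st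
  exacts [isCodeterministicStep_childR.binaryDefinable,
    isCodeterministicStep_childR.binaryDefinable.swap,
    isCodeterministicStep_nsR.binaryDefinable, isCodeterministicStep_nsR.binaryDefinable.swap]

theorem binaryDefinable_transGen_rel_and (st : XStep) (hP : UnaryDefinable P) :
    BinaryDefinable (fun T => TransGen fun s t => st.rel T s t ∧ P T t) := by
  cases st
  exacts [isCodeterministicStep_childR.transGen_and hP,
    isCodeterministicStep_childR.transGen_swap_and hP,
    isCodeterministicStep_nsR.transGen_and hP, isCodeterministicStep_nsR.transGen_swap_and hP]

end FO

mutual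
  theorem CXNode.unaryDefinable_sat : ∀ α : CXNode A, FO.UnaryDefinable (CXNode.Sat · · α)
    | .lab a => fun m => ⟨.lab a m, fun T v _ => by simp only [FO.Sat, CXNode.Sat]⟩
    | .not α => by simpa only [CXNode.Sat] using α.unaryDefinable_sat.not
    | .or α β => by simpa only [CXNode.Sat] using α.unaryDefinable_sat.or β.unaryDefinable_sat
    | .E β => β.binaryDefinable_sat.unaryDefinable_exists.congr fun T s hs => by
      rw [CXNode.Sat]
      exact exists_congr fun t => (and_iff_right_of_imp (β.mem_of_sat hs)).symm
  theorem CXPath.binaryDefinable_sat : ∀ β : CXPath A, FO.BinaryDefinable (CXPath.Sat · · · β)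
    | .test α => by
      simpa only [CXPath.sat_test] using FO.BinaryDefinable.eq.and α.unaryDefinable_sat.fst
    | .step st => by simpa only [CXPath.sat_step] using FO.binaryDefinable_rel st
    | .until st α => by
      simpa only [CXPath.sat_until] using
        FO.binaryDefinable_transGen_rel_and st α.unaryDefinable_sat
    | .comp β γ => (β.binaryDefinable_sat.comp γ.binaryDefinable_sat).congr fun T s hs t _ => by
      rw [CXPath.sat_comp]
      exact exists_congr fun u => (and_iff_right_of_imp fun h => β.mem_of_sat hs h.1).symm
    | .or β γ => by
      simpa only [CXPath.sat_or] using β.binaryDefinable_sat.or γ.binaryDefinable_sat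
end

/-- The node formulas of Conditional XPath have precisely the
power of unary FO queries over ordered unranked Σ-trees. -/
theorem cxpath_iff_fo (A : Type) [Fintype A]
    (Q : UTree A → Set Node) (hQ : ∀ T, Q T ⊆ ↑T.dom) :
    (∃ α : CXNode A, ∀ (T : UTree A) (s : Node), s ∈ T.dom →
        (s ∈ Q T ↔ CXNode.Sat T s α)) ↔
    (∃ φ : FO A, φ.DefinesU Q) := by
  constructor
  · rintro ⟨α, hα⟩
    obtain ⟨φ, hφ⟩ := α.unaryDefinable_sat 0
    refine ⟨φ, fun T v s hs => (hα T s hs).trans ?_⟩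
    simpa only [Function.update_self, hs, forall_const, Iff.comm] using
      hφ T (Function.update v 0 s)
  · rintro ⟨φ, hφ⟩
    obtain ⟨α, hα⟩ := nodeDefinable_sat φ
    refine ⟨α, fun T s hs => (hφ T (fun _ => s) s hs).trans ?_⟩
    simpa only [Function.update_eq_self] using hα ⟨T, s, hs⟩

end UnrankedTrees
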